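/- arXiv:0812.2111 — 3 statements merged into one kernel-verified Lean document; each statement's English description precedes it below -/
import Mathlib

section
/- Let X be a Hausdorff topological space, Y ⊆ X closed, and k ≥ 0. If every point y ∈ Y admits a neighborhood basis (U_ε) such that each pair (U_ε, U_ε \ Y) is k-connected, then the pair (X, X \ Y) is k-connected. -/
open unitInterval

noncomputable section

/-- The boundary of the cube [0,1]^ℓ. -/
def cubeBoundary (ℓ : ℕ) : Set (Fin ℓ → I) := {x | ∃ i, x i = 0 ∨ x i = 1}

/-- The pair (X, A) is k-connected: every point of X can be joined by a path to a point of A,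
and for all ℓ ≤ k, every map (Iˡ, ∂Iˡ) → (X, A) is homotopic relative to its boundary to a map
with image in A. -/
def IsConnectedPair (X : Type*) [TopologicalSpace X] (A : Set X) (k : ℕ) : Prop :=
  (∀ x : X, ∃ a ∈ A, Joined x a) ∧
  ∀ ℓ : ℕ, ℓ ≤ k → ∀ f : C(Fin ℓ → I, X), (∀ x ∈ cubeBoundary ℓ, f x ∈ A) →
    ∃ g : C(Fin ℓ → I, X), (∀ x, g x ∈ A) ∧
      Nonempty (ContinuousMap.HomotopyRel f g (cubeBoundary ℓ))

/-! ### Extension over a single cube -/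

lemma cellExt {X : Type} [TopologicalSpace X] (Y W : Set X) (j k : ℕ) (hj : j ≤ k)
    (hW : IsConnectedPair W {x : W | (x : X) ∉ Y} k)
    (G : (Fin j → ℝ) × ℝ → X)
    (hG : ContinuousOn G {q | ‖q.1‖ ≤ 1 ∧ q.2 ∈ Set.Icc (0:ℝ) 1 ∧ (q.2 = 0 ∨ ‖q.1‖ = 1)})
    (hGW : ∀ q : (Fin j → ℝ) × ℝ, ‖q.1‖ ≤ 1 → q.2 ∈ Set.Icc (0:ℝ) 1 →
      (q.2 = 0 ∨ ‖q.1‖ = 1) → G q ∈ W)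
    (hGY : ∀ y, ‖y‖ = 1 → G (y, 1) ∉ Y) :
    ∃ H : (Fin j → ℝ) × ℝ → X, Continuous H ∧ (∀ q, H q ∈ W) ∧
      (∀ y, ‖y‖ ≤ 1 → H (y, 0) = G (y, 0)) ∧
      (∀ y t, ‖y‖ = 1 → t ∈ Set.Icc (0:ℝ) 1 → H (y, t) = G (y, t)) ∧
      (∀ y, ‖y‖ ≤ 1 → H (y, 1) ∉ Y) := by
  classical
  have hmpos : ∀ x : Fin j → ℝ, 0 < max ‖x‖ (1/2) := fun x => lt_max_of_lt_right (by norm_num)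
  set ψ : (Fin j → ℝ) → (Fin j → ℝ) × ℝ :=
    fun x => ((max ‖x‖ (1/2))⁻¹ • x, max 0 (2 * ‖x‖ - 1)) with hψ
  have hψc : Continuous ψ := by
    have : Continuous fun x : Fin j → ℝ => (max ‖x‖ (1/2))⁻¹ :=
      Continuous.inv₀ (by fun_prop) (fun x => (hmpos x).ne')
    rw [hψ]
    fun_prop
  have hψA : ∀ x, ‖x‖ ≤ 1 → ψ x ∈ {q : (Fin j → ℝ) × ℝ |
      ‖q.1‖ ≤ 1 ∧ q.2 ∈ Set.Icc (0:ℝ) 1 ∧ (q.2 = 0 ∨ ‖q.1‖ = 1)} := by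
    intro x hx
    have hn : ‖(max ‖x‖ (1/2))⁻¹ • x‖ = (max ‖x‖ (1/2))⁻¹ * ‖x‖ := by
      rw [norm_smul, Real.norm_of_nonneg (inv_nonneg.2 (hmpos x).le)]
    refine ⟨?_, ⟨le_max_left _ _, max_le (by norm_num) (by linarith)⟩, ?_⟩
    · simp only [hψ]
      rw [hn, inv_mul_le_iff₀ (hmpos x), mul_one]
      exact le_max_left _ _
    · simp only [hψ]
      rcases le_total ‖x‖ (1/2) with h | h
      · left; exact max_eq_left (by linarith)
      · right
        rw [hn, max_eq_left h, inv_mul_cancel₀]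
        linarith
  -- coordinates
  let u : (Fin j → I) → (Fin j → ℝ) := fun y i => 2 * (y i : ℝ) - 1
  have huc : Continuous u := by fun_prop
  have hu1 : ∀ y, ‖u y‖ ≤ 1 := by
    intro y
    rw [pi_norm_le_iff_of_nonneg zero_le_one]
    intro i
    have h1 := (y i).2.1
    have h2 := (y i).2.2
    rw [Real.norm_eq_abs, abs_le]
    constructor <;> simp only [u] <;> linarith
  let v : (Fin j → ℝ) → (Fin j → I) := fun x i => Set.projIcc 0 1 zero_le_one ((x i + 1) / 2)
  have hvc : Continuous v := by
    refine continuous_pi fun i => ?_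
    exact continuous_projIcc.comp (by fun_prop)
  have huv : ∀ x, ‖x‖ ≤ 1 → u (v x) = x := by
    intro x hx
    funext i
    have := (norm_le_pi_norm x i).trans hx
    rw [Real.norm_eq_abs, abs_le] at this
    simp only [u, v]
    rw [Set.projIcc_of_mem zero_le_one (x := (x i + 1)/2) ⟨by linarith, by linarith⟩]
    simp only
    ring
  have hub : ∀ y ∈ cubeBoundary j, ‖u y‖ = 1 := by
    rintro y ⟨i, hi⟩
    refine le_antisymm (hu1 y) ?_
    have := norm_le_pi_norm (u y) i
    refine le_trans (le_of_eq ?_) this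
    rcases hi with hi | hi <;> simp [u, hi] <;> norm_num
  have hvb : ∀ x : Fin j → ℝ, ‖x‖ = 1 → v x ∈ cubeBoundary j := by
    intro x hx
    by_contra hcon
    have hlt : ∀ i, ‖x i‖ < 1 := by
      intro i
      have h1 := norm_le_pi_norm x i
      rw [hx] at h1
      refine lt_of_le_of_ne h1 fun he => hcon ⟨i, ?_⟩
      rcases (abs_eq (zero_le_one' ℝ)).1 he with h | h
      · right
        simp [v, h]
      · left
        simp [v, h]
    have := (pi_norm_lt_iff (x := x) zero_lt_one).2 hlt
    linarith
  have hψ1 : ∀ x : Fin j → ℝ, ‖x‖ = 1 → ψ x = (x, 1) := by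
    intro x hx
    simp only [hψ, hx]
    norm_num
  let f' : C(Fin j → I, W) :=
    ⟨fun y => ⟨G (ψ (u y)), by
      obtain ⟨h1, h2, h3⟩ := hψA _ (hu1 y)
      exact hGW _ h1 h2 h3⟩, by
      refine Continuous.subtype_mk ?_ _
      exact hG.comp_continuous (hψc.comp huc) (fun y => hψA _ (hu1 y))⟩
  have hf'b : ∀ y ∈ cubeBoundary j, f' y ∈ {x : W | (x : X) ∉ Y} := by
    intro y hy
    show G (ψ (u y)) ∉ Y
    rw [hψ1 _ (hub y hy)]
    exact hGY _ (hub y hy)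
  obtain ⟨g, hg, ⟨Φ⟩⟩ := hW.2 j hj f' hf'b
  let τ : (Fin j → ℝ) × ℝ → ℝ := fun q => q.2 * min 1 (2 * (1 - ‖q.1‖))
  let α : (Fin j → ℝ) × ℝ → ℝ := fun q => (1 - q.2) / 2 + q.2 * (max ‖q.1‖ (1/2))⁻¹
  have hαc : Continuous α := by
    have : Continuous fun q : (Fin j → ℝ) × ℝ => (max ‖q.1‖ (1/2))⁻¹ :=
      Continuous.inv₀ (by fun_prop) (fun q => (hmpos q.1).ne')
    fun_prop
  have hτc : Continuous τ := by fun_prop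
  let H : (Fin j → ℝ) × ℝ → X := fun q =>
    (Φ (Set.projIcc 0 1 zero_le_one (τ q), v (α q • q.1)) : W)
  have h0 : ∀ x, ‖x‖ ≤ 1 → ∀ q : (Fin j → ℝ) × ℝ, τ q = 0 → α q • q.1 = x → H q = G (ψ x) := by
    intro x hx q hq hq'
    have e0 : (Set.projIcc 0 1 zero_le_one (0:ℝ) : I) = 0 := Set.projIcc_left _
    simp only [H, hq, hq', e0]
    rw [Φ.apply_zero]
    show G (ψ (u (v x))) = _
    rw [huv x hx]
  refine ⟨H, ?_, fun q => Subtype.coe_prop _, ?_, ?_, ?_⟩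
  · refine continuous_subtype_val.comp (Φ.continuous.comp ?_)
    exact (continuous_projIcc.comp hτc).prodMk (hvc.comp (hαc.smul continuous_fst))
  · intro y hy
    have hn : ‖(1/2 : ℝ) • y‖ = ‖y‖ / 2 := by
      rw [norm_smul]; norm_num; ring
    rw [h0 ((1/2 : ℝ) • y) (by rw [hn]; linarith) _ (by simp [τ]) (by simp [α])]
    simp only [hψ]
    rw [hn, max_eq_right (by linarith), max_eq_left (by linarith)]
    simp [smul_smul]
  · intro y t hy ht
    have hn : ‖((1 + t) / 2) • y‖ = (1 + t) / 2 := by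
      rw [norm_smul, hy, Real.norm_of_nonneg (by linarith [ht.1]), mul_one]
    rw [h0 (((1 + t) / 2) • y) (by rw [hn]; linarith [ht.2]) _ (by simp [τ, hy]) (by
      simp only [α, hy]
      rw [max_eq_left (by norm_num)]
      congr 1
      ring)]
    simp only [hψ]
    rw [hn, max_eq_left (by linarith [ht.1]), max_eq_right (by linarith [ht.1]), smul_smul,
      inv_mul_cancel₀ (by linarith [ht.1]), one_smul]
    congr 2
    ring
  · intro y hy
    rcases le_total ‖y‖ (1/2) with h | h
    · have e1 : τ (y, 1) = 1 := by
        simp only [τ]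
        rw [min_eq_left (by linarith)]
        ring
      have e0 : (Set.projIcc 0 1 zero_le_one (1:ℝ) : I) = 1 := Set.projIcc_right _
      simp only [H, e1, e0]
      rw [Φ.apply_one]
      exact hg _
    · have hn : ‖α (y, 1) • y‖ = 1 := by
        simp only [α]
        rw [max_eq_left h, norm_smul]
        have : 0 < ‖y‖ := by linarith
        simp [this.ne']
      have := Φ.eq_fst (Set.projIcc 0 1 zero_le_one (τ (y, 1))) (hvb _ hn)
      simp only [H]
      rw [this]
      exact hf'b _ (hvb _ hn)

/-! ### The integral grid -/

/-- Closed cell of the integral grid. -/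
def gcell {l : ℕ} (a : Fin l → ℤ) (s : Finset (Fin l)) : Set (Fin l → ℝ) :=
  {x | ∀ i, (i ∈ s → (a i : ℝ) ≤ x i ∧ x i ≤ a i + 1) ∧ (i ∉ s → x i = a i)}

lemma isClosed_gcell {l : ℕ} (a : Fin l → ℤ) (s : Finset (Fin l)) : IsClosed (gcell a s) := by
  have : gcell a s = ⋂ i, ({x : Fin l → ℝ | i ∈ s → (a i : ℝ) ≤ x i ∧ x i ≤ a i + 1} ∩
      {x | i ∉ s → x i = a i}) := by
    ext x; simp [gcell]
  rw [this]
  refine isClosed_iInter fun i => IsClosed.inter ?_ ?_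
  · by_cases h : i ∈ s
    · simp only [h, true_imp_iff]
      exact (isClosed_le continuous_const (continuous_apply i)).inter
        (isClosed_le (continuous_apply i) continuous_const)
    · simp [h]
  · by_cases h : i ∈ s
    · simp [h]
    · simp only [h, not_false_eq_true, true_imp_iff]
      exact isClosed_eq (continuous_apply i) continuous_const

open Classical in
/-- Directions of the carrier cell of a point. -/
def carrierDir {l : ℕ} (x : Fin l → ℝ) : Finset (Fin l) :=
  Finset.univ.filter fun i => ((⌊x i⌋ : ℤ) : ℝ) ≠ x i

lemma carrierDir_subset {l : ℕ} {a : Fin l → ℤ} {s : Finset (Fin l)} {x : Fin l → ℝ}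
    (hx : x ∈ gcell a s) : carrierDir x ⊆ s := by
  intro i hi
  by_contra his
  have h := (hx i).2 his
  simp [carrierDir, h] at hi

lemma carrier_cases {l : ℕ} {a : Fin l → ℤ} {s : Finset (Fin l)} {x : Fin l → ℝ}
    (hx : x ∈ gcell a s) :
    (carrierDir x = s ∧ (fun i => ⌊x i⌋) = a) ∨
    ((carrierDir x).card < s.card ∧ ∃ i ∈ s, x i = a i ∨ x i = a i + 1) := by
  by_cases h : carrierDir x = s
  · left
    refine ⟨h, ?_⟩
    funext i
    by_cases his : i ∈ s
    · have h1 := (hx i).1 his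
      rw [← h] at his
      simp only [carrierDir, Finset.mem_filter, Finset.mem_univ, true_and] at his
      rw [Int.floor_eq_iff]
      refine ⟨h1.1, lt_of_le_of_ne h1.2 fun he => his ?_⟩
      rw [he]
      have : ((a i : ℝ) + 1) = ((a i + 1 : ℤ) : ℝ) := by push_cast; ring
      rw [this, Int.floor_intCast]
    · rw [(hx i).2 his, Int.floor_intCast]
  · right
    have hss : carrierDir x ⊂ s := lt_of_le_of_ne (carrierDir_subset hx) h
    refine ⟨Finset.card_lt_card hss, ?_⟩
    obtain ⟨i, his, hi⟩ := Finset.exists_of_ssubset hss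
    refine ⟨i, his, ?_⟩
    simp only [carrierDir, Finset.mem_filter, Finset.mem_univ, true_and, not_not] at hi
    have h1 := (hx i).1 his
    rw [← hi] at h1 ⊢
    have h2 : a i ≤ ⌊x i⌋ := by exact_mod_cast h1.1
    have h3 : ⌊x i⌋ ≤ a i + 1 := by exact_mod_cast h1.2
    have h4 : ⌊x i⌋ = a i ∨ ⌊x i⌋ = a i + 1 := by omega
    rcases h4 with h4 | h4
    · left; rw [h4]
    · right; rw [h4]; push_cast; ring

/-- A facet of a cell. -/
lemma facet_subset {l : ℕ} (a : Fin l → ℤ) (s : Finset (Fin l)) (i : Fin l) (hi : i ∈ s)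
    (b : Bool) :
    gcell (Function.update a i (a i + if b then 1 else 0)) (s.erase i) ⊆ gcell a s := by
  intro x hx m
  by_cases hm : m = i
  · subst hm
    have := (hx m).2 (by simp)
    rw [Function.update_self] at this
    refine ⟨fun _ => ?_, fun h => absurd hi h⟩
    rw [this]
    cases b <;> simp
  · have := hx m
    simpa [hm] using this

lemma mem_facet {l : ℕ} {a : Fin l → ℤ} {s : Finset (Fin l)} {i : Fin l}
    (b : Bool) {x : Fin l → ℝ} (hx : x ∈ gcell a s) (h : x i = a i + if b then 1 else 0) :
    x ∈ gcell (Function.update a i (a i + if b then 1 else 0)) (s.erase i) := by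
  intro m
  by_cases hm : m = i
  · subst hm
    refine ⟨fun h => by simp at h, fun _ => ?_⟩
    rw [h, Function.update_self]
    cases b <;> simp
  · have := hx m
    simpa [hm] using this

lemma exists_facet {l : ℕ} {a : Fin l → ℤ} {s : Finset (Fin l)} {x : Fin l → ℝ}
    (hx : x ∈ gcell a s) (h : ∃ i ∈ s, x i = a i ∨ x i = a i + 1) :
    ∃ i ∈ s, ∃ b : Bool,
      x ∈ gcell (Function.update a i (a i + if b then 1 else 0)) (s.erase i) := by
  obtain ⟨i, hi, h | h⟩ := h
  · exact ⟨i, hi, false, mem_facet false hx (by simpa using h)⟩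
  · exact ⟨i, hi, true, mem_facet true hx (by simpa using h)⟩

/-- Gluing over finite closed covers. -/
lemma continuousOn_of_finite_cover {ι A B : Type*} [Finite ι] [TopologicalSpace A]
    [TopologicalSpace B] (c : ι → Set A) (hc : ∀ i, IsClosed (c i)) (f : A → B)
    (hf : ∀ i, ContinuousOn f (c i)) (S : Set A) (hS : S ⊆ ⋃ i, c i) : ContinuousOn f S :=
  ((locallyFinite_of_finite c).continuousOn_iUnion hc (fun i => hf i)).mono hS

/-- The inductive invariant over a cell. -/
def GoodOn {X : Type} [TopologicalSpace X] {l : ℕ} (Y : Set X) (F : (Fin l → ℝ) → X)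
    (W : (Fin l → ℤ) → Finset (Fin l) → Set X) (H : (Fin l → ℝ) × ℝ → X)
    (a : Fin l → ℤ) (s : Finset (Fin l)) : Prop :=
  ContinuousOn H (gcell a s ×ˢ Set.Icc (0:ℝ) 1) ∧ (∀ x ∈ gcell a s, H (x, 1) ∉ Y) ∧
  ((∀ x ∈ gcell a s, F x ∉ Y) → ∀ x ∈ gcell a s, ∀ t ∈ Set.Icc (0:ℝ) 1, H (x, t) = F x) ∧
  ((∃ x ∈ gcell a s, F x ∈ Y) → ∀ x ∈ gcell a s, ∀ t ∈ Set.Icc (0:ℝ) 1, H (x, t) ∈ W a s)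

lemma cellStep {X : Type} [TopologicalSpace X] {l : ℕ} (Y : Set X) (k : ℕ)
    (F : (Fin l → ℝ) → X) (hF : Continuous F)
    (W : (Fin l → ℤ) → Finset (Fin l) → Set X) (H : (Fin l → ℝ) × ℝ → X)
    (hH0 : ∀ x, H (x, 0) = F x)
    (a : Fin l → ℤ) (s : Finset (Fin l)) (hk : s.card ≤ k)
    (hlow : ∀ a' s', s'.card < s.card → GoodOn Y F W H a' s')
    (hW1 : (∃ x ∈ gcell a s, F x ∈ Y) → (∀ x ∈ gcell a s, F x ∈ W a s) ∧
      IsConnectedPair (W a s) {x : W a s | (x : X) ∉ Y} k)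
    (hW2 : ∀ a' s', s'.card + 1 = s.card → gcell a' s' ⊆ gcell a s →
      (∃ x ∈ gcell a' s', F x ∈ Y) → W a' s' ⊆ W a s) :
    ∃ H' : (Fin l → ℝ) × ℝ → X, GoodOn Y F W H' a s ∧ (∀ x ∈ gcell a s, H' (x, 0) = F x) ∧
      ∀ x ∈ gcell a s, (∃ i ∈ s, x i = a i ∨ x i = a i + 1) →
        ∀ t ∈ Set.Icc (0:ℝ) 1, H' (x, t) = H (x, t) := by
  classical
  by_cases hne : ∃ x ∈ gcell a s, F x ∈ Y
  swap
  · have hne' : ∀ x ∈ gcell a s, F x ∉ Y := fun x hx hy => hne ⟨x, hx, hy⟩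
    refine ⟨fun q => F q.1, ⟨(hF.comp continuous_fst).continuousOn, hne',
      fun _ _ _ _ _ => rfl, fun h => absurd h hne⟩, fun _ _ => rfl, ?_⟩
    intro x hx hb t ht
    obtain ⟨i, hi, b, hxb⟩ := exists_facet hx hb
    have hcard : (s.erase i).card < s.card := Finset.card_erase_lt_of_mem hi
    exact ((hlow _ _ hcard).2.2.1
      (fun z hz => hne' z (facet_subset a s i hi b hz)) x hxb t ht).symm
  obtain ⟨hFW, hconn⟩ := hW1 hne
  -- coordinates on the cell
  let ε := s.equivFin
  let e : (Fin s.card → ℝ) → (Fin l → ℝ) := fun y i =>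
    if h : i ∈ s then a i + (y (ε ⟨i, h⟩) + 1) / 2 else a i
  let p : (Fin l → ℝ) → (Fin s.card → ℝ) := fun x m =>
    2 * (x (ε.symm m) - a (ε.symm m)) - 1
  have hec : Continuous e := by
    refine continuous_pi fun i => ?_
    by_cases h : i ∈ s
    · simp only [e, h, dite_true]
      fun_prop
    · simp only [e, h, dite_false]
      fun_prop
  have hpc : Continuous p := by fun_prop
  have hep : ∀ x ∈ gcell a s, e (p x) = x := by
    intro x hx
    funext i
    by_cases h : i ∈ s
    · simp only [e, p, h, dite_true, Equiv.symm_apply_apply]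
      ring
    · simp only [e, h, dite_false]
      exact ((hx i).2 h).symm
  have hpn : ∀ x ∈ gcell a s, ‖p x‖ ≤ 1 := by
    intro x hx
    rw [pi_norm_le_iff_of_nonneg zero_le_one]
    intro m
    have := (hx (ε.symm m)).1 (ε.symm m).2
    rw [Real.norm_eq_abs, abs_le]
    constructor <;> simp only [p] <;> linarith [this.1, this.2]
  have hpb : ∀ x ∈ gcell a s, (∃ i ∈ s, x i = a i ∨ x i = a i + 1) → ‖p x‖ = 1 := by
    rintro x hx ⟨i, hi, h⟩
    refine le_antisymm (hpn x hx) ?_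
    refine le_trans (le_of_eq ?_) (norm_le_pi_norm (p x) (ε ⟨i, hi⟩))
    simp only [p, Equiv.symm_apply_apply]
    rcases h with h | h <;> rw [h] <;> norm_num
  have hecell : ∀ y, ‖y‖ ≤ 1 → e y ∈ gcell a s := by
    intro y hy i
    refine ⟨fun h => ?_, fun h => by simp [e, h]⟩
    have := (norm_le_pi_norm y (ε ⟨i, h⟩)).trans hy
    rw [Real.norm_eq_abs, abs_le] at this
    simp only [e, h, dite_true]
    constructor <;> linarith [this.1, this.2]
  have heb : ∀ y, ‖y‖ = 1 → ∃ i ∈ s, e y i = a i ∨ e y i = a i + 1 := by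
    intro y hy
    by_contra hcon
    have hlt : ∀ m, ‖y m‖ < 1 := by
      intro m
      have h1 := norm_le_pi_norm y m
      rw [hy] at h1
      refine lt_of_le_of_ne h1 fun he => hcon ⟨ε.symm m, (ε.symm m).2, ?_⟩
      rcases (abs_eq (zero_le_one' ℝ)).1 he with h | h
      · right
        simp [e, h]
      · left
        simp [e, h]
    have := (pi_norm_lt_iff (x := y) zero_lt_one).2 hlt
    linarith
  -- facts on the boundary
  have hbW : ∀ x ∈ gcell a s, (∃ i ∈ s, x i = a i ∨ x i = a i + 1) →
      (H (x, 1) ∉ Y ∧ ∀ t ∈ Set.Icc (0:ℝ) 1, H (x, t) ∈ W a s) := by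
    intro x hx hb
    obtain ⟨i, hi, b, hxb⟩ := exists_facet hx hb
    have hcard : (s.erase i).card < s.card := Finset.card_erase_lt_of_mem hi
    have hg := hlow (Function.update a i (a i + if b then 1 else 0)) _ hcard
    refine ⟨hg.2.1 x hxb, fun t ht => ?_⟩
    by_cases hm : ∃ z ∈ gcell (Function.update a i (a i + if b then 1 else 0)) (s.erase i), F z ∈ Y
    · exact hW2 _ _ (Finset.card_erase_add_one hi) (facet_subset a s i hi b) hm
        (hg.2.2.2 hm x hxb t ht)
    · rw [hg.2.2.1 (fun z hz hy => hm ⟨z, hz, hy⟩) x hxb t ht]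
      exact hFW x hx
  obtain ⟨H₁, hc, hHW, hz, hbd, hone⟩ := cellExt Y (W a s) s.card k hk hconn
    (fun q => H (e q.1, q.2)) (by
      have hem : Continuous fun q : (Fin s.card → ℝ) × ℝ => (e q.1, q.2) := by fun_prop
      let c : Option (s × Bool) → Set ((Fin s.card → ℝ) × ℝ) := fun o => match o with
        | none => {q | q.2 = 0}
        | some (i, b) => (fun q : (Fin s.card → ℝ) × ℝ => (e q.1, q.2)) ⁻¹'
          (gcell (Function.update a i (a i + if b then 1 else 0)) (s.erase i) ×ˢ Set.Icc (0:ℝ) 1)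
      refine continuousOn_of_finite_cover c ?_ _ ?_ _ ?_
      · rintro (_ | ⟨i, b⟩)
        · exact isClosed_eq continuous_snd continuous_const
        · exact ((isClosed_gcell _ _).prod isClosed_Icc).preimage hem
      · rintro (_ | ⟨i, b⟩)
        · have : ContinuousOn (fun q : (Fin s.card → ℝ) × ℝ => F (e q.1)) {q | q.2 = 0} := by
            fun_prop
          refine this.congr ?_
          rintro ⟨y, t⟩ ht
          have ht' : t = 0 := ht
          simp only [ht', hH0]
        · have hcard : (s.erase i).card < s.card := Finset.card_erase_lt_of_mem i.2
          exact (hlow (Function.update a i (a i + if b then 1 else 0)) _ hcard).1.comp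
            hem.continuousOn (fun q hq => hq)
      · rintro ⟨y, t⟩ ⟨h1, h2, h3⟩
        rw [Set.mem_iUnion]
        rcases h3 with h3 | h3
        · exact ⟨none, h3⟩
        · obtain ⟨i, hi, b, hxb⟩ := exists_facet (hecell y h1) (heb y h3)
          exact ⟨some (⟨i, hi⟩, b), ⟨hxb, h2⟩⟩)
    (by
      rintro ⟨y, t⟩ h1 h2 h3
      rcases h3 with h3 | h3
      · have h3' : t = 0 := h3
        simp only [h3', hH0]
        exact hFW _ (hecell y h1)
      · exact (hbW _ (hecell y h1) (heb y h3)).2 t h2)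
    (fun y hy => (hbW _ (hecell y hy.le) (heb y hy)).1)
  refine ⟨fun q => H₁ (p q.1, q.2), ⟨?_, ?_, ?_, ?_⟩, ?_, ?_⟩
  · have : Continuous fun q : (Fin l → ℝ) × ℝ => H₁ (p q.1, q.2) := by fun_prop
    exact this.continuousOn
  · intro x hx
    exact hone _ (hpn x hx)
  · intro h
    obtain ⟨x, hx, hy⟩ := hne
    exact absurd hy (h x hx)
  · intro _ x hx t ht
    exact hHW _
  · intro x hx
    simp only
    rw [hz _ (hpn x hx), hep x hx, hH0]
  · intro x hx hb t ht
    simp only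
    rw [hbd _ t (hpb x hx hb) ht, hep x hx]

lemma skeleton {X : Type} [TopologicalSpace X] {l : ℕ} (Y : Set X) (k : ℕ) (hl : l ≤ k)
    (F : (Fin l → ℝ) → X) (hF : Continuous F)
    (W : (Fin l → ℤ) → Finset (Fin l) → Set X)
    (hW1 : ∀ a s, (∃ x ∈ gcell a s, F x ∈ Y) → (∀ x ∈ gcell a s, F x ∈ W a s) ∧
      IsConnectedPair (W a s) {x : W a s | (x : X) ∉ Y} k)
    (hW2 : ∀ a s a' s', s'.card + 1 = s.card → gcell a' s' ⊆ gcell a s →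
      (∃ x ∈ gcell a' s', F x ∈ Y) → W a' s' ⊆ W a s) (j : ℕ) :
    ∃ H : (Fin l → ℝ) × ℝ → X, (∀ x, H (x, 0) = F x) ∧
      ∀ a s, s.card < j → GoodOn Y F W H a s := by
  classical
  induction j with
  | zero => exact ⟨fun q => F q.1, fun _ => rfl, fun _ _ h => absurd h (Nat.not_lt_zero _)⟩
  | succ j ih =>
    obtain ⟨H, hH0, hH⟩ := ih
    have key : ∀ (a : Fin l → ℤ) (s : Finset (Fin l)), ∃ H' : (Fin l → ℝ) × ℝ → X,
        s.card = j → (GoodOn Y F W H' a s ∧ (∀ x ∈ gcell a s, H' (x, 0) = F x) ∧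
        ∀ x ∈ gcell a s, (∃ i ∈ s, x i = a i ∨ x i = a i + 1) →
        ∀ t ∈ Set.Icc (0:ℝ) 1, H' (x, t) = H (x, t)) := by
      intro a s
      by_cases hs : s.card = j
      · have hsk : s.card ≤ k := (Finset.card_le_univ s).trans (by simpa using hl)
        obtain ⟨H', h'⟩ := cellStep Y k F hF W H hH0 a s hsk
          (fun a' s' h => hH a' s' (hs ▸ h)) (hW1 a s) (hW2 a s)
        exact ⟨H', fun _ => h'⟩
      · exact ⟨H, fun h => absurd h hs⟩
    choose Hc hHc using key
    let H' : (Fin l → ℝ) × ℝ → X := fun q =>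
      if (carrierDir q.1).card = j then Hc (fun i => ⌊q.1 i⌋) (carrierDir q.1) q else H q
    have hcar : ∀ x : Fin l → ℝ, x ∈ gcell (fun i => ⌊x i⌋) (carrierDir x) := by
      intro x i
      refine ⟨fun _ => ⟨Int.floor_le _, (Int.lt_floor_add_one _).le⟩, fun h => ?_⟩
      simp only [carrierDir, Finset.mem_filter, Finset.mem_univ, true_and, not_not] at h
      exact h.symm
    have hlowEq : ∀ a s, s.card < j → ∀ x ∈ gcell a s, ∀ t, H' (x, t) = H (x, t) := by
      intro a s hs x hx t
      have := Finset.card_le_card (carrierDir_subset hx)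
      simp only [H']
      rw [if_neg (by omega)]
    have hEq : ∀ a s, s.card = j → ∀ x ∈ gcell a s, ∀ t ∈ Set.Icc (0:ℝ) 1,
        H' (x, t) = Hc a s (x, t) := by
      intro a s hs x hx t ht
      simp only [H']
      rcases carrier_cases hx with ⟨h1, h2⟩ | ⟨h1, h2⟩
      · rw [h1, h2, if_pos hs]
      · rw [if_neg (by omega)]
        exact ((hHc a s hs).2.2 x hx h2 t ht).symm
    have transfer : ∀ (H₁ : (Fin l → ℝ) × ℝ → X) (a : Fin l → ℤ) (s : Finset (Fin l)),
        (∀ x ∈ gcell a s, ∀ t ∈ Set.Icc (0:ℝ) 1, H' (x, t) = H₁ (x, t)) →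
        GoodOn Y F W H₁ a s → GoodOn Y F W H' a s := by
      rintro H₁ a s he ⟨g1, g2, g3, g4⟩
      refine ⟨g1.congr ?_, ?_, ?_, ?_⟩
      · rintro ⟨x, t⟩ ⟨hx, ht⟩
        exact he x hx t ht
      · intro x hx
        rw [he x hx 1 (by simp)]
        exact g2 x hx
      · intro h x hx t ht
        rw [he x hx t ht]
        exact g3 h x hx t ht
      · intro h x hx t ht
        rw [he x hx t ht]
        exact g4 h x hx t ht
    refine ⟨H', ?_, ?_⟩
    · intro x
      simp only [H']
      split_ifs with h
      · exact (hHc _ _ h).2.1 x (hcar x)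
      · exact hH0 x
    · intro a s hs
      rcases Nat.lt_succ_iff_lt_or_eq.1 hs with h | h
      · exact transfer H a s (fun x hx t _ => hlowEq a s h x hx t) (hH a s h)
      · exact transfer (Hc a s) a s (hEq a s h) (hHc a s h).1

/-! ### The tower of neighbourhoods -/

lemma towerStep {X Q : Type} [TopologicalSpace X] [PseudoMetricSpace Q] [CompactSpace Q]
    (f : C(Q, X)) (K : Set Q) (hK : IsClosed K) (P : Set X → Prop)
    (hP : ∀ y ∈ K, ∀ V ∈ nhds (f y), ∃ U ∈ nhds (f y), U ⊆ V ∧ P U)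
    (W : Q → Set X) (δ : ℝ) (hδ : 0 < δ) (hfin : (Set.range W).Finite)
    (hW : ∀ x ∈ K, ∀ z ∈ Metric.ball x δ, f z ∈ interior (W x)) :
    ∃ (W' : Q → Set X) (δ' : ℝ), 0 < δ' ∧ (Set.range W').Finite ∧
      (∀ x ∈ K, ∀ z ∈ Metric.ball x δ', f z ∈ interior (W' x)) ∧
      δ' ≤ δ ∧ (∀ x ∈ K, P (W' x)) ∧
      (∀ x ∈ K, ∀ x' ∈ K, dist x x' < δ' → W' x' ⊆ W x) := by
  classical
  have h1 : ∀ y : K, ∃ U ∈ nhds (f y), P U ∧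
      ∀ V ∈ Set.range W, f y ∈ interior V → U ⊆ V := by
    intro y
    have : (⋂ V ∈ {V ∈ Set.range W | f y ∈ interior V}, V) ∈ nhds (f y) := by
      rw [Filter.biInter_mem (hfin.subset (Set.sep_subset _ _))]
      intro V hV
      exact mem_interior_iff_mem_nhds.1 hV.2
    obtain ⟨U, hU, hUV, hPU⟩ := hP y y.2 _ this
    exact ⟨U, hU, hPU, fun V hV hy => hUV.trans (Set.biInter_subset_of_mem (⟨hV, hy⟩ :
      V ∈ {V ∈ Set.range W | f y ∈ interior V}))⟩
  choose U hU hPU hUV using h1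
  let O : K → Set Q := fun y => f ⁻¹' (interior (U y)) ∩ Metric.ball (y : Q) (δ / 2)
  have hO : ∀ y, IsOpen (O y) := fun y =>
    (isOpen_interior.preimage f.continuous).inter Metric.isOpen_ball
  have hcov : K ⊆ ⋃ y, O y := by
    intro y hy
    exact Set.mem_iUnion.2 ⟨⟨y, hy⟩, mem_interior_iff_mem_nhds.2 (hU ⟨y, hy⟩),
      Metric.mem_ball_self (by linarith)⟩
  obtain ⟨t, ht⟩ := hK.isCompact.elim_finite_subcover O hO hcov
  obtain ⟨r, hr, hleb⟩ := lebesgue_number_lemma_of_metric (s := K) (c := fun y : t => O y)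
    hK.isCompact (fun y => hO y) (by
      intro x hx
      obtain ⟨y, hy, hxy⟩ := Set.mem_iUnion₂.1 (ht hx)
      exact Set.mem_iUnion.2 ⟨⟨y, hy⟩, hxy⟩)
  have hsel : ∀ x : Q, ∃ V : Set X, V ∈ insert Set.univ (t.image U : Finset (Set X)) ∧ 
      (x ∈ K → ∃ y : t, V = U y ∧ Metric.ball x r ⊆ O y) := by
    intro x
    by_cases hx : x ∈ K
    · obtain ⟨y, hy⟩ := hleb x hx
      exact ⟨U y, by
        refine Finset.mem_insert_of_mem (Finset.mem_image_of_mem U y.2), fun _ => ⟨y, rfl, hy⟩⟩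
    · exact ⟨Set.univ, by simp, fun h => absurd h hx⟩
  choose W' hW'1 hW'2 using hsel
  refine ⟨W', min r (δ / 2), lt_min hr (by linarith), ?_, ?_, ?_, ?_, ?_⟩
  · refine (Finset.finite_toSet (insert Set.univ (t.image U : Finset (Set X)))).subset ?_
    rintro _ ⟨x, rfl⟩
    exact hW'1 x
  · intro x hx z hz
    obtain ⟨y, hy, hb⟩ := hW'2 x hx
    rw [hy]
    exact (hb (Metric.ball_subset_ball (min_le_left _ _) hz)).1
  · exact (min_le_right _ _).trans (by linarith)
  · intro x hx
    obtain ⟨y, hy, hb⟩ := hW'2 x hx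
    rw [hy]
    exact hPU y
  · intro x hx x' hx' hd
    obtain ⟨y, hy, hb⟩ := hW'2 x' hx'
    rw [hy]
    refine hUV y _ ⟨x, rfl⟩ (hW x hx _ ?_)
    have h1 : dist x' (y : Q) < δ / 2 := (hb (Metric.mem_ball_self hr)).2
    have h2 : dist x x' < δ / 2 := hd.trans_le (min_le_right _ _)
    rw [Metric.mem_ball, dist_comm]
    linarith [dist_triangle x x' (y : Q)]

lemma tower {X Q : Type} [TopologicalSpace X] [PseudoMetricSpace Q] [CompactSpace Q]
    (f : C(Q, X)) (K : Set Q) (hK : IsClosed K) (P : Set X → Prop)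
    (hP : ∀ y ∈ K, ∀ V ∈ nhds (f y), ∃ U ∈ nhds (f y), U ⊆ V ∧ P U) (n : ℕ) :
    ∃ (W : ℕ → Q → Set X) (δ : ℝ), 0 < δ ∧
      (∀ m < n, ∀ x ∈ K, P (W m x) ∧ ∀ z ∈ Metric.ball x δ, f z ∈ W m x) ∧
      (∀ m, m + 1 < n → ∀ x ∈ K, ∀ x' ∈ K, dist x x' < δ → W m x' ⊆ W (m + 1) x) := by
  suffices h : ∃ (W : ℕ → Q → Set X) (δ : ℝ), 0 < δ ∧
      (∀ m < n, ∀ x ∈ K, P (W m x) ∧ ∀ z ∈ Metric.ball x δ, f z ∈ W m x) ∧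
      (∀ m, m + 1 < n → ∀ x ∈ K, ∀ x' ∈ K, dist x x' < δ → W m x' ⊆ W (m + 1) x) ∧
      ((Set.range (W 0)).Finite ∧ ∀ x ∈ K, ∀ z ∈ Metric.ball x δ, f z ∈ interior (W 0 x)) by
    obtain ⟨W, δ, h1, h2, h3, -⟩ := h
    exact ⟨W, δ, h1, h2, h3⟩
  induction n with
  | zero =>
    refine ⟨fun _ _ => Set.univ, 1, one_pos, by simp, by simp, ?_, by simp⟩
    exact (Set.finite_singleton Set.univ).subset (by rintro _ ⟨x, rfl⟩; rfl)
  | succ n ih =>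
    obtain ⟨W, δ, hδ, h1, h2, h3, h4⟩ := ih
    obtain ⟨W', δ', hδ', g1, g2, g3, g4, g5⟩ := towerStep f K hK P hP (W 0) δ hδ h3 h4
    refine ⟨fun m => Nat.casesOn m W' W, δ', hδ', ?_, ?_, g1, g2⟩
    · rintro (_ | m) hm x hx
      · exact ⟨g4 x hx, fun z hz => interior_subset (g2 x hx z hz)⟩
      · exact ⟨(h1 m (by omega) x hx).1, fun z hz =>
          (h1 m (by omega) x hx).2 z (Metric.ball_subset_ball g3 hz)⟩
    · rintro (_ | m) hm x hx x' hx' hd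
      · exact g5 x hx x' hx' hd
      · exact h2 m (by omega) x hx x' hx' (hd.trans_le g3)

/-! ### Main theorem -/

lemma main_push {X : Type} [TopologicalSpace X] (Y : Set X) (hY : IsClosed Y) (k : ℕ)
    (hP : ∀ y ∈ Y, ∀ V ∈ nhds y, ∃ U ∈ nhds y, U ⊆ V ∧
      IsConnectedPair U {x : U | (x : X) ∉ Y} k)
    (l : ℕ) (hl : l ≤ k) (f : C(Fin l → I, X)) (hf : ∀ x ∈ cubeBoundary l, f x ∉ Y) :
    ∃ g : C(Fin l → I, X), (∀ x, g x ∉ Y) ∧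
      Nonempty (ContinuousMap.HomotopyRel f g (cubeBoundary l)) := by
  classical
  obtain ⟨T, δ, hδ, hT1, hT2⟩ := tower f (f ⁻¹' Y) (hY.preimage f.continuous)
    (fun U => IsConnectedPair U {x : U | (x : X) ∉ Y} k) (fun y hy => hP (f y) hy) (l + 1)
  obtain ⟨n, hn⟩ := exists_nat_one_div_lt hδ
  set N : ℝ := (n : ℝ) + 1 with hN
  have hNpos : 0 < N := by positivity
  let π : (Fin l → ℝ) → (Fin l → I) := fun x i => Set.projIcc 0 1 zero_le_one (x i / N)
  have hπc : Continuous π := by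
    refine continuous_pi fun i => ?_
    exact continuous_projIcc.comp (by fun_prop)
  have hπd : ∀ (a : Fin l → ℤ) s, ∀ x ∈ gcell a s, ∀ x' ∈ gcell a s, dist (π x) (π x') < δ := by
    intro a s x hx x' hx'
    refine lt_of_le_of_lt ?_ hn
    rw [dist_pi_le_iff (by positivity)]
    intro i
    have h1 : |x i - x' i| ≤ 1 := by
      rw [abs_le]
      by_cases h : i ∈ s
      · have := (hx i).1 h
        have := (hx' i).1 h
        constructor <;> linarith
      · rw [(hx i).2 h, (hx' i).2 h]
        norm_num
    have h2 : dist (π x i) (π x' i) ≤ |x i / N - x' i / N| := by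
      rw [Subtype.dist_eq, Real.dist_eq]
      exact Set.abs_projIcc_sub_projIcc zero_le_one
    refine h2.trans ?_
    rw [← sub_div, abs_div, abs_of_pos hNpos]
    gcongr
  let F : (Fin l → ℝ) → X := fun x => f (π x)
  have hF : Continuous F := f.continuous.comp hπc
  let W : (Fin l → ℤ) → Finset (Fin l) → Set X := fun a s =>
    if h : ∃ x ∈ gcell a s, F x ∈ Y then T s.card (π h.choose) else Set.univ
  have hcard : ∀ s : Finset (Fin l), s.card < l + 1 := fun s =>
    Nat.lt_succ_of_le ((Finset.card_le_univ s).trans (by simp))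
  obtain ⟨H, hH0, hH⟩ := skeleton Y k hl F hF W (by
    intro a s h
    have hs := h.choose_spec
    have ht := hT1 s.card (hcard s) (π h.choose) hs.2
    have hWe : W a s = T s.card (π h.choose) := by simp only [W]; rw [dif_pos h]
    rw [hWe]
    exact ⟨fun x hx => ht.2 _ (hπd a s _ hx _ hs.1), ht.1⟩) (by
    intro a s a' s' hc hsub h'
    have h : ∃ x ∈ gcell a s, F x ∈ Y := by
      obtain ⟨x, hx, hy⟩ := h'
      exact ⟨x, hsub hx, hy⟩
    have hWe : W a s = T s.card (π h.choose) := by simp only [W]; rw [dif_pos h]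
    have hWe' : W a' s' = T s'.card (π h'.choose) := by simp only [W]; rw [dif_pos h']
    rw [hWe, hWe', ← hc]
    exact hT2 _ (hc ▸ hcard s) _ h.choose_spec.2 _ h'.choose_spec.2
      (hπd a s _ h.choose_spec.1 _ (hsub h'.choose_spec.1))) (l + 1)
  replace hH : ∀ a s, GoodOn Y F W H a s := fun a s => hH a s (hcard s)
  have hcar : ∀ x : Fin l → ℝ, x ∈ gcell (fun i => ⌊x i⌋) Finset.univ := by
    intro x i
    exact ⟨fun _ => ⟨Int.floor_le _, (Int.lt_floor_add_one _).le⟩, fun h => absurd (by simp) h⟩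
  let sg : (Fin l → I) → (Fin l → ℝ) := fun y i => N * (y i : ℝ)
  have hsgc : Continuous sg := by fun_prop
  have hFsg : ∀ y, F (sg y) = f y := by
    intro y
    simp only [F]
    congr 1
    funext i
    simp only [π, sg]
    rw [mul_div_cancel_left₀ _ hNpos.ne', Set.projIcc_val]
  have hcont : Continuous fun q : I × (Fin l → I) => H (sg q.2, (q.1 : ℝ)) := by
    have hco : ContinuousOn H ((Set.range sg) ×ˢ Set.Icc (0:ℝ) 1) := by
      refine continuousOn_of_finite_cover
        (fun a : Fin l → Fin (n + 2) => gcell (fun i => ((a i : ℕ) : ℤ)) Finset.univ ×ˢ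
          Set.Icc (0:ℝ) 1) (fun a => (isClosed_gcell _ _).prod isClosed_Icc) H
          (fun a => (hH _ _).1) _ ?_
      rintro ⟨_, t⟩ ⟨⟨y, rfl⟩, ht⟩
      rw [Set.mem_iUnion]
      have h0 : ∀ i, 0 ≤ ⌊sg y i⌋ := fun i =>
        Int.floor_nonneg.2 (mul_nonneg hNpos.le (y i).2.1)
      have h1 : ∀ i, ⌊sg y i⌋ < n + 2 := by
        intro i
        rw [Int.floor_lt]
        have : sg y i ≤ N * 1 := mul_le_mul_of_nonneg_left (y i).2.2 hNpos.le
        push_cast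
        rw [hN] at this
        linarith
      refine ⟨fun i => ⟨(⌊sg y i⌋).toNat, by have := h0 i; have := h1 i; omega⟩, ?_, ht⟩
      have : (fun i => (((⌊sg y i⌋).toNat : ℕ) : ℤ)) = fun i => ⌊sg y i⌋ := by
        funext i
        exact Int.toNat_of_nonneg (h0 i)
      simp only [this]
      exact hcar _
    refine hco.comp_continuous (by fun_prop) ?_
    rintro ⟨t, y⟩
    exact ⟨⟨y, rfl⟩, t.2⟩
  have hbdry : ∀ y ∈ cubeBoundary l, ∀ t ∈ Set.Icc (0:ℝ) 1, H (sg y, t) = f y := by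
    rintro y ⟨i, hi⟩ t ht
    have hmem : sg y ∈ gcell (fun i => ⌊sg y i⌋) (Finset.univ.erase i) := by
      intro m
      refine ⟨fun _ => (hcar (sg y) m).1 (by simp), fun hm => ?_⟩
      have hm' : m = i := by simpa using hm
      subst hm'
      rcases hi with hi | hi
      · simp [sg, hi]
      · have : sg y m = ((n + 1 : ℤ) : ℝ) := by simp [sg, hi, hN]
        show sg y m = ((⌊sg y m⌋ : ℤ) : ℝ)
        rw [this, Int.floor_intCast]
    rw [← hFsg]
    refine (hH _ _).2.2.1 ?_ _ hmem t ht
    intro x hx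
    refine hf _ ⟨i, ?_⟩
    have hxi := (hx i).2 (by simp)
    rcases hi with hi | hi
    · left
      have : x i = 0 := by rw [hxi]; simp [sg, hi]
      simp [π, this]
    · right
      have h1 : sg y i = ((n + 1 : ℤ) : ℝ) := by simp [sg, hi, hN]
      have : x i = N := by rw [hxi, h1, Int.floor_intCast]; simp [hN]
      simp [π, this, div_self hNpos.ne']
  refine ⟨⟨fun y => H (sg y, 1), ?_⟩, ?_, ⟨⟨⟨⟨fun q => H (sg q.2, (q.1 : ℝ)), hcont⟩, ?_, ?_⟩, ?_⟩⟩⟩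
  · have := hcont.comp (Continuous.prodMk_right (1 : I) : Continuous fun y : Fin l → I => ((1 : I), y))
    simpa [Function.comp_def] using this
  · intro y
    exact (hH _ _).2.1 _ (hcar (sg y))
  · intro y
    simp [hH0, hFsg]
  · intro y
    simp
  · intro t y hy
    exact hbdry y hy t t.2

/-- Localization: if every point of the closed set Y has a neighborhood basis (U_ε) such that
each pair (U_ε, U_ε \ Y) is k-connected, then (X, X \ Y) is k-connected. -/
theorem localization {X : Type} [TopologicalSpace X] [T2Space X] (Y : Set X)
    (hY : IsClosed Y) (k : ℕ)
    (h : ∀ y ∈ Y, ∃ 𝒰 : Set (Set X),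
      (∀ U ∈ 𝒰, U ∈ nhds y) ∧ (∀ V ∈ nhds y, ∃ U ∈ 𝒰, U ⊆ V) ∧
      (∀ U ∈ 𝒰, IsConnectedPair U {x : U | (x : X) ∉ Y} k)) :
    IsConnectedPair X Yᶜ k := by
  have hP : ∀ y ∈ Y, ∀ V ∈ nhds y, ∃ U ∈ nhds y, U ⊆ V ∧
      IsConnectedPair U {x : U | (x : X) ∉ Y} k := by
    intro y hy V hV
    obtain ⟨𝒰, h1, h2, h3⟩ := h y hy
    obtain ⟨U, hU, hUV⟩ := h2 V hV
    exact ⟨U, h1 U hU, hUV, h3 U hU⟩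
  refine ⟨fun x => ?_, fun l hl f hf => main_push Y hY k hP l hl f hf⟩
  by_cases hx : x ∈ Y
  · obtain ⟨U, hU, -, hc⟩ := hP x hx Set.univ Filter.univ_mem
    obtain ⟨a, ha, hj⟩ := hc.1 ⟨x, mem_of_mem_nhds hU⟩
    exact ⟨a, ha, hj.map continuous_subtype_val⟩
  · exact ⟨x, hx, Joined.refl x⟩
end
end

section
/- The Chabauty space 𝒞(ℝⁿ) is simply connected for every n ≥ 1. -/
noncomputable section

abbrev Euc (n : ℕ) := EuclideanSpace ℝ (Fin n)

/-- A point of the Chabauty space of ℝⁿ: a closed additive subgroup. -/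
def ChabautyPoint (n : ℕ) : Type := {Γ : AddSubgroup (Euc n) // IsClosed (Γ : Set (Euc n))}

/-- The Chabauty (Fell) topology on the space of closed subgroups of ℝⁿ. -/
instance chabautyTopology (n : ℕ) : TopologicalSpace (ChabautyPoint n) :=
  TopologicalSpace.generateFrom
    ({S | ∃ K : Set (Euc n), IsCompact K ∧
        S = {Γ : ChabautyPoint n | ((Γ.1 : Set (Euc n)) ∩ K) = ∅}} ∪
     {S | ∃ U : Set (Euc n), IsOpen U ∧
        S = {Γ : ChabautyPoint n | ((Γ.1 : Set (Euc n)) ∩ U).Nonempty}})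

section Top
open Topology unitInterval

variable {X : Type*} [TopologicalSpace X]

/-- A continuous square gives a relation between the classes of its sides. -/
theorem square_lemma (F : I × I → X) (hF : Continuous F) {a b c d : X}
    (p : Path a b) (q : Path c d) (l : Path a c) (r : Path b d)
    (hp : ∀ t, p t = F (0, t)) (hq : ∀ t, q t = F (1, t))
    (hl : ∀ s, l s = F (s, 0)) (hr : ∀ s, r s = F (s, 1)) :
    (Path.Homotopic.Quotient.mk p).trans (Path.Homotopic.Quotient.mk r) = (Path.Homotopic.Quotient.mk l).trans (Path.Homotopic.Quotient.mk q) := by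
  have ha : a = F (0, 0) := by rw [← hp, p.source]
  have hb : b = F (0, 1) := by rw [← hp, p.target]
  have hc : c = F (1, 0) := by rw [← hq, q.source]
  have hd : d = F (1, 1) := by rw [← hq, q.target]
  subst ha hb hc hd
  let p0 : Path ((0, 0) : I × I) (0, 1) := ⟨⟨fun t => (0, t), by fun_prop⟩, rfl, rfl⟩
  let q0 : Path ((1, 0) : I × I) (1, 1) := ⟨⟨fun t => (1, t), by fun_prop⟩, rfl, rfl⟩
  let l0 : Path ((0, 0) : I × I) (1, 0) := ⟨⟨fun t => (t, 0), by fun_prop⟩, rfl, rfl⟩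
  let r0 : Path ((0, 1) : I × I) (1, 1) := ⟨⟨fun t => (t, 1), by fun_prop⟩, rfl, rfl⟩
  have ep : p = p0.map hF := by ext t; simp [hp, p0]
  have eq : q = q0.map hF := by ext t; simp [hq, q0]
  have el : l = l0.map hF := by ext t; simp [hl, l0]
  have er : r = r0.map hF := by ext t; simp [hr, r0]
  have : ContractibleSpace I := Convex.contractibleSpace (convex_Icc (0:ℝ) 1) ⟨0, by simp⟩
  have h := SimplyConnectedSpace.paths_homotopic (p0.trans r0) (l0.trans q0)
  have h2 := h.map ⟨F, hF⟩
  rw [Path.map_trans, Path.map_trans] at h2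
  rw [ep, eq, el, er, ← Path.Homotopic.Quotient.mk_trans, ← Path.Homotopic.Quotient.mk_trans]
  exact Path.Homotopic.Quotient.eq.2 h2

/-- The class `P` is represented by a path inside `D`. -/
def DH (D : Set X) {a b : X} (P : Path.Homotopic.Quotient a b) : Prop :=
  ∃ q : Path a b, (∀ t, q t ∈ D) ∧ P = Path.Homotopic.Quotient.mk q

theorem DH.trans {D : Set X} {a b c : X} {P : Path.Homotopic.Quotient a b} {Q : Path.Homotopic.Quotient b c}
    (hP : DH D P) (hQ : DH D Q) : DH D (P.trans Q) := by
  obtain ⟨p, hp, rfl⟩ := hP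
  obtain ⟨q, hq, rfl⟩ := hQ
  refine ⟨p.trans q, fun t => ?_, by rw [Path.Homotopic.Quotient.mk_trans]⟩
  have : (p.trans q) t ∈ Set.range (p.trans q) := ⟨t, rfl⟩
  rw [Path.trans_range] at this
  rcases this with ⟨s, hs⟩ | ⟨s, hs⟩
  · rw [← hs]; exact hp s
  · rw [← hs]; exact hq s

theorem DH.symm {D : Set X} {a b : X} {P : Path.Homotopic.Quotient a b} (hP : DH D P) : DH D P.symm := by
  obtain ⟨p, hp, rfl⟩ := hP
  exact ⟨p.symm, fun t => hp _, by rw [Path.Homotopic.Quotient.mk_symm]⟩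

theorem DH.of {D : Set X} {a b : X} (p : Path a b) (hp : ∀ t, p t ∈ D) :
    DH D (Path.Homotopic.Quotient.mk p) := ⟨p, hp, rfl⟩

/-- Three sides of a square in `D` (up to homotopy) gives the fourth. -/
theorem DH.square {D : Set X} (F : I × I → X) (hF : Continuous F) {a b c d : X}
    (p : Path a b) (q : Path c d)
    (hp : ∀ t, p t = F (0, t)) (hq : ∀ t, q t = F (1, t))
    (hl : ∀ s, F (s, 0) ∈ D) (hr : ∀ s, F (s, 1) ∈ D) (h : DH D (Path.Homotopic.Quotient.mk q)) :
    DH D (Path.Homotopic.Quotient.mk p) := by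
  let l : Path a c := ⟨⟨fun s => F (s, 0), by fun_prop⟩, by simp [← hp], by simp [← hq]⟩
  let r : Path b d := ⟨⟨fun s => F (s, 1), by fun_prop⟩, by simp [← hp], by simp [← hq]⟩
  have e := square_lemma F hF p q l r hp hq (fun _ => rfl) (fun _ => rfl)
  have : Path.Homotopic.Quotient.mk p = ((Path.Homotopic.Quotient.mk l).trans (Path.Homotopic.Quotient.mk q)).trans (Path.Homotopic.Quotient.mk r).symm := by
    rw [← e]; simp
  rw [this]
  exact ((DH.of l hl).trans h).trans (DH.of r hr).symm

/-- If `S` contracts in `X`, then paths in `S` with the same ends are homotopic. -/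
theorem contr_paths {S : Set X} (H : S × I → X) (hH : Continuous H) (x0 : X)
    (h0 : ∀ s, H (s, 0) = s) (h1 : ∀ s, H (s, 1) = x0) {a b : X} (p q : Path a b)
    (hp : ∀ t, p t ∈ S) (hq : ∀ t, q t ∈ S) : Path.Homotopic.Quotient.mk p = Path.Homotopic.Quotient.mk q := by
  have ha : a ∈ S := by simpa using hp 0
  have hb : b ∈ S := by simpa using hp 1
  let l : Path a x0 := ⟨⟨fun s => H (⟨a, ha⟩, s), by fun_prop⟩, by simp [h0], by simp [h1]⟩
  let r : Path b x0 := ⟨⟨fun s => H (⟨b, hb⟩, s), by fun_prop⟩, by simp [h0], by simp [h1]⟩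
  have key : ∀ (p : Path a b) (hp : ∀ t, p t ∈ S),
      (Path.Homotopic.Quotient.mk p).trans (Path.Homotopic.Quotient.mk r) = (Path.Homotopic.Quotient.mk l).trans (Path.Homotopic.Quotient.mk (Path.refl x0)) := by
    intro p hp
    refine square_lemma (fun z => H (⟨p z.2, hp _⟩, z.1)) (by fun_prop) p _ l r ?_ ?_ ?_ ?_
    · simp [h0]
    · simp [h1]
    · intro s; simp [l]
    · intro s; simp [r]
  have e := (key p hp).trans (key q hq).symm
  calc Path.Homotopic.Quotient.mk p = ((Path.Homotopic.Quotient.mk p).trans (Path.Homotopic.Quotient.mk r)).trans (Path.Homotopic.Quotient.mk r).symm := by simp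
    _ = ((Path.Homotopic.Quotient.mk q).trans (Path.Homotopic.Quotient.mk r)).trans (Path.Homotopic.Quotient.mk r).symm := by rw [e]
    _ = _ := by simp

theorem simply_connected_criterion (D : Set X) (H : D × I → X) (hH : Continuous H) (x0 : X)
    (h0 : ∀ s, H (s, 0) = s) (h1 : ∀ s, H (s, 1) = x0)
    (hδ : ∀ x : X, ∃ y, ∃ δ : Path x y, ∀ s, s ≠ 0 → δ s ∈ D)
    (hU : ∀ x : X, ∃ U ∈ 𝓝 x, ∀ (a b : X) (p : Path a b), a ∈ D → b ∈ D → (∀ t, p t ∈ U) →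
      DH D (Path.Homotopic.Quotient.mk p)) : SimplyConnectedSpace X := by
  choose y δ hδ using hδ
  have hy : ∀ x, y x ∈ D := fun x => by simpa using hδ x 1 one_ne_zero
  -- class of a path after moving the ends into `D`
  let G : ∀ {a b : X}, Path a b → Prop := fun {a b} p =>
    DH D (((Path.Homotopic.Quotient.mk (δ a)).symm.trans (Path.Homotopic.Quotient.mk p)).trans (Path.Homotopic.Quotient.mk (δ b)))
  have Gcast : ∀ {a b a' b' : X} (ha : a' = a) (hb : b' = b) (p : Path a b),
      G (p.cast ha hb) → G p := by
    intro a b a' b' ha hb p h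
    subst ha hb
    exact h
  have Gtrans : ∀ {a b c : X} (p : Path a b) (q : Path b c) (r : Path a c),
      Path.Homotopic.Quotient.mk r = (Path.Homotopic.Quotient.mk p).trans (Path.Homotopic.Quotient.mk q) → G p → G q → G r := by
    intro a b c p q r hr hp hq
    have := hp.trans hq
    simp only [G]
    convert this using 1
    rw [hr]
    simp only [Path.Homotopic.Quotient.trans_assoc]
    congr 2
    rw [← Path.Homotopic.Quotient.trans_assoc, Path.Homotopic.Quotient.trans_symm, Path.Homotopic.Quotient.refl_trans]
  -- paths with small image
  have small : ∀ x : X, ∃ U ∈ 𝓝 x, ∀ (a b : X) (p : Path a b), (∀ t, p t ∈ U) → G p := by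
    intro x
    obtain ⟨U, hUx, hU⟩ := hU x
    obtain ⟨O, hOU, hO, hxO⟩ := mem_nhds_iff.1 hUx
    refine ⟨O, hO.mem_nhds hxO, fun a b p hp => ?_⟩
    have cut : ∀ a ∈ O, ∃ s : I, s ≠ 0 ∧ ∀ t, ((δ a).subpath 0 s) t ∈ O := by
      intro a ha
      have : (δ a) ⁻¹' O ∈ 𝓝 (0 : I) := by
        apply (δ a).continuous.continuousAt.preimage_mem_nhds
        simpa using hO.mem_nhds ha
      have hbasis := Metric.mem_nhds_iff.1 this
      obtain ⟨ε, hε, hb⟩ := hbasis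
      let s : I := ⟨min (ε/2) 1, by positivity, min_le_right _ _⟩
      have hs : 0 < (s : ℝ) := by simp only [s]; positivity
      refine ⟨s, fun h => by rw [h] at hs; simp at hs, fun t => ?_⟩
      have hm : ((δ a).subpath 0 s) t ∈ Set.range ((δ a).subpath 0 s) := ⟨t, rfl⟩
      rw [Path.range_subpath_of_le _ _ _ (by exact hs.le)] at hm
      obtain ⟨r, hr, hr'⟩ := hm
      rw [← hr']
      apply hb
      rw [Metric.mem_ball, Subtype.dist_eq, Real.dist_eq]
      have h1 : (r : ℝ) ≤ s := hr.2
      have h2 : (s : ℝ) ≤ ε / 2 := min_le_left _ _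
      have h3 : (0:ℝ) ≤ r := r.2.1
      simp only [Set.Icc.coe_zero, sub_zero, abs_of_nonneg h3]
      linarith
    have tail : ∀ (a : X) (s : I), s ≠ 0 → ∀ t, ((δ a).subpath s 1) t ∈ D := by
      intro a s hs t
      have hm : ((δ a).subpath s 1) t ∈ Set.range ((δ a).subpath s 1) := ⟨t, rfl⟩
      rw [Path.range_subpath_of_le _ _ _ (unitInterval.le_one' )] at hm
      obtain ⟨r, hr, hr'⟩ := hm
      rw [← hr']
      apply hδ
      intro h
      apply hs
      rw [h] at hr
      exact le_antisymm hr.1 (unitInterval.nonneg')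
    have ha : a ∈ O := by simpa using hp 0
    have hb : b ∈ O := by simpa using hp 1
    obtain ⟨s, hs, hsO⟩ := cut a ha
    obtain ⟨r, hr, hrO⟩ := cut b hb
    let pa : Path a (δ a s) := ((δ a).subpath 0 s).cast (by simp) rfl
    let pb : Path b (δ b r) := ((δ b).subpath 0 r).cast (by simp) rfl
    let ta : Path (δ a s) (y a) := ((δ a).subpath s 1).cast rfl (by simp)
    let tb : Path (δ b r) (y b) := ((δ b).subpath r 1).cast rfl (by simp)
    have split : ∀ (x : X) (s : I) (h0 : x = δ x 0) (h1 : y x = δ x 1), Path.Homotopic.Quotient.mk (δ x) =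
        (Path.Homotopic.Quotient.mk (((δ x).subpath 0 s).cast h0 rfl)).trans
          (Path.Homotopic.Quotient.mk (((δ x).subpath s 1).cast rfl h1)) := by
      intro x s h0 h1
      have h := Path.Homotopy.subpathTransSubpath (δ x) 0 s 1
      rw [Path.subpath_zero_one] at h
      have h' := Path.Homotopic.pathCast ⟨h⟩ h0 h1
      rw [← Path.Homotopic.Quotient.mk_trans]
      apply Eq.symm
      apply Path.Homotopic.Quotient.eq.2
      exact h'
    have ea : Path.Homotopic.Quotient.mk (δ a) = (Path.Homotopic.Quotient.mk pa).trans (Path.Homotopic.Quotient.mk ta) := split _ _ _ _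
    have eb : Path.Homotopic.Quotient.mk (δ b) = (Path.Homotopic.Quotient.mk pb).trans (Path.Homotopic.Quotient.mk tb) := split _ _ _ _
    have mid : DH D (((Path.Homotopic.Quotient.mk pa).symm.trans (Path.Homotopic.Quotient.mk p)).trans (Path.Homotopic.Quotient.mk pb)) := by
      rw [← Path.Homotopic.Quotient.mk_symm, ← Path.Homotopic.Quotient.mk_trans, ← Path.Homotopic.Quotient.mk_trans]
      apply hU _ _ _ (hδ _ _ hs) (hδ _ _ hr)
      intro t
      apply hOU
      have hm : ((pa.symm.trans p).trans pb) t ∈ Set.range ((pa.symm.trans p).trans pb) := ⟨t, rfl⟩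
      rw [Path.trans_range, Path.trans_range, Path.symm_range] at hm
      rcases hm with (⟨u, hu⟩ | ⟨u, hu⟩) | ⟨u, hu⟩
      · rw [← hu]; exact hsO u
      · rw [← hu]; exact hp u
      · rw [← hu]; exact hrO u
    have fin := ((DH.of ta (tail a s hs)).symm.trans mid).trans (DH.of tb (tail b r hr))
    simp only [G]
    convert fin using 1
    rw [ea, eb]
    have es : ((Path.Homotopic.Quotient.mk pa).trans (Path.Homotopic.Quotient.mk ta)).symm =
        (Path.Homotopic.Quotient.mk ta).symm.trans (Path.Homotopic.Quotient.mk pa).symm := by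
      rw [← Path.Homotopic.Quotient.mk_trans, ← Path.Homotopic.Quotient.mk_symm, Path.trans_symm, Path.Homotopic.Quotient.mk_trans,
        Path.Homotopic.Quotient.mk_symm, Path.Homotopic.Quotient.mk_symm]
    rw [es]
    simp only [Path.Homotopic.Quotient.trans_assoc]
  have all : ∀ {a b : X} (p : Path a b), G p := by
    intro a b p
    have hloc : ∀ t : I, ∃ W ∈ 𝓝 t, ∀ s ∈ W, ∀ r ∈ W, G (p.subpath s r) := by
      intro t
      obtain ⟨U, hUx, hU⟩ := small (p t)
      have : p ⁻¹' U ∈ 𝓝 t := p.continuous.continuousAt.preimage_mem_nhds hUx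
      obtain ⟨ε, hε, hb⟩ := Metric.mem_nhds_iff.1 this
      refine ⟨Metric.ball t ε, Metric.ball_mem_nhds _ hε, fun s hs r hr => hU _ _ _ fun u => ?_⟩
      have hm : (p.subpath s r) u ∈ Set.range (p.subpath s r) := ⟨u, rfl⟩
      rw [Path.range_subpath] at hm
      obtain ⟨v, hv, hv'⟩ := hm
      rw [← hv']
      apply hb
      rw [Metric.mem_ball, Subtype.dist_eq, Real.dist_eq] at hs hr ⊢
      rw [abs_lt] at *
      rcases le_total s r with h | h
      · rw [Set.uIcc_of_le h] at hv
        have h1 : (s : ℝ) ≤ v := hv.1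
        have h2 : (v : ℝ) ≤ r := hv.2
        constructor <;> linarith
      · rw [Set.uIcc_of_ge h] at hv
        have h1 : (r : ℝ) ≤ v := hv.1
        have h2 : (v : ℝ) ≤ s := hv.2
        constructor <;> linarith
    let S : Set I := {t | G (p.subpath 0 t)}
    have step : ∀ s r : I, G (p.subpath s r) → s ∈ S → r ∈ S := by
      intro s r h hs
      refine Gtrans _ _ _ ?_ hs h
      rw [← Path.Homotopic.Quotient.mk_trans]
      exact (Path.Homotopic.Quotient.eq.2 ⟨Path.Homotopy.subpathTransSubpath p 0 s r⟩).symm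
    have hcl : IsClopen S := by
      constructor
      · rw [← isOpen_compl_iff, isOpen_iff_mem_nhds]
        intro t ht
        obtain ⟨W, hW, hWG⟩ := hloc t
        filter_upwards [hW] with s hs hsS
        exact ht (step s t (hWG s hs t (mem_of_mem_nhds hW)) hsS)
      · rw [isOpen_iff_mem_nhds]
        intro t ht
        obtain ⟨W, hW, hWG⟩ := hloc t
        filter_upwards [hW] with s hs
        exact step t s (hWG t (mem_of_mem_nhds hW) s hs) ht
    have h0S : (0 : I) ∈ S := by
      obtain ⟨W, hW, hWG⟩ := hloc 0
      exact hWG 0 (mem_of_mem_nhds hW) 0 (mem_of_mem_nhds hW)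
    have huniv := hcl.eq_univ ⟨0, h0S⟩
    have h1S : (1 : I) ∈ S := by rw [huniv]; trivial
    have : G (p.subpath 0 1) := h1S
    rw [Path.subpath_zero_one] at this
    exact Gcast _ _ _ this
  rw [simply_connected_iff_paths_homotopic']
  constructor
  · have hj : ∀ x, Joined x x0 := by
      intro x
      have h1' : Joined x (y x) := ⟨δ x⟩
      refine h1'.trans ⟨⟨⟨fun s => H (⟨y x, hy x⟩, s), by fun_prop⟩, by simp [h0], by simp [h1]⟩⟩
    exact ⟨⟨x0⟩, fun x z => (hj x).trans (hj z).symm⟩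
  · intro a b p q
    obtain ⟨p', hp', ep⟩ := all p
    obtain ⟨q', hq', eq⟩ := all q
    have e := contr_paths H hH x0 h0 h1 p' q' hp' hq'
    rw [← ep, ← eq] at e
    apply Path.Homotopic.Quotient.eq.1
    have cancel : ∀ P : Path.Homotopic.Quotient a b, P = ((Path.Homotopic.Quotient.mk (δ a)).trans
      (((Path.Homotopic.Quotient.mk (δ a)).symm.trans P).trans (Path.Homotopic.Quotient.mk (δ b)))).trans
        (Path.Homotopic.Quotient.mk (δ b)).symm := by
      intro P
      simp only [Path.Homotopic.Quotient.trans_assoc, Path.Homotopic.Quotient.trans_symm, Path.Homotopic.Quotient.trans_refl]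
      rw [← Path.Homotopic.Quotient.trans_assoc, Path.Homotopic.Quotient.trans_symm, Path.Homotopic.Quotient.refl_trans]
    rw [cancel (Path.Homotopic.Quotient.mk p), e, ← cancel]

end Top
section Chab
open Topology Filter

variable {n : ℕ}

theorem chab_ext {A B : ChabautyPoint n} (h : ∀ x, x ∈ A.1 ↔ x ∈ B.1) : A = B :=
  Subtype.ext (AddSubgroup.ext h)

theorem chab_continuous {Y : Type*} [TopologicalSpace Y] (f : Y → ChabautyPoint n)
    (h1 : ∀ y x, x ∉ (f y).1 → ∀ᶠ q : Y × Euc n in 𝓝 (y, x), q.2 ∉ (f q.1).1)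
    (h2 : ∀ y, ∀ x ∈ (f y).1, ∀ ε > 0, ∀ᶠ y' in 𝓝 y, ∃ z ∈ (f y').1, dist z x < ε) :
    Continuous f := by
  refine continuous_generateFrom_iff.2 ?_
  rintro S (⟨K, hK, rfl⟩ | ⟨U, hU, rfl⟩)
  · rw [isOpen_iff_mem_nhds]
    intro y hy
    have hy' : ((f y).1 : Set (Euc n)) ∩ K = ∅ := hy
    have : ∀ x ∈ K, ∀ᶠ q : Y × Euc n in 𝓝 y ×ˢ 𝓝 x, q.2 ∉ (f q.1).1 := by
      intro x hx
      rw [← nhds_prod_eq]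
      apply h1
      intro hxf
      have : x ∈ ((f y).1 : Set (Euc n)) ∩ K := ⟨hxf, hx⟩
      rw [hy'] at this
      exact this
    have h := hK.eventually_forall_of_forall_eventually (x₀ := y)
      (P := fun a b => b ∉ (f a).1) (fun x hx => by rw [nhds_prod_eq]; exact this x hx)
    filter_upwards [h] with y' hy'
    show ((f y').1 : Set (Euc n)) ∩ K = ∅
    ext z
    simp only [Set.mem_inter_iff, SetLike.mem_coe, Set.mem_empty_iff_false, iff_false, not_and]
    intro hz hzK
    exact hy' z hzK hz
  · rw [isOpen_iff_mem_nhds]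
    rintro y ⟨x, hx, hxU⟩
    obtain ⟨ε, hε, hb⟩ := Metric.isOpen_iff.1 hU x hxU
    filter_upwards [h2 y x hx ε hε] with y' ⟨z, hz, hzx⟩
    exact ⟨z, hz, hb hzx⟩

theorem chab_closed {Y : Type*} [TopologicalSpace Y] {f : Y → ChabautyPoint n}
    (hf : Continuous f) (y : Y) (x : Euc n) (hx : x ∉ (f y).1) :
    ∀ᶠ q : Y × Euc n in 𝓝 (y, x), q.2 ∉ (f q.1).1 := by
  have hop : IsOpen (((f y).1 : Set (Euc n))ᶜ) := (f y).2.isOpen_compl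
  obtain ⟨ε, hε, hb⟩ := Metric.isOpen_iff.1 hop x hx
  let K := Metric.closedBall x (ε/2)
  have hK : IsCompact K := isCompact_closedBall _ _
  have hO : IsOpen {Γ : ChabautyPoint n | ((Γ.1 : Set (Euc n)) ∩ K) = ∅} :=
    TopologicalSpace.isOpen_generateFrom_of_mem (Or.inl ⟨K, hK, rfl⟩)
  have hy : f y ∈ {Γ : ChabautyPoint n | ((Γ.1 : Set (Euc n)) ∩ K) = ∅} := by
    show ((f y).1 : Set (Euc n)) ∩ K = ∅
    ext z
    simp only [Set.mem_inter_iff, Set.mem_empty_iff_false, iff_false, not_and]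
    intro hz hzK
    exact hb (Metric.closedBall_subset_ball (by linarith) hzK) hz
  have h := hf.continuousAt.eventually (hO.mem_nhds hy)
  rw [nhds_prod_eq]
  filter_upwards [h.prod_mk (Metric.closedBall_mem_nhds x (half_pos hε))] with q hq hqf
  have : q.2 ∈ ((f q.1).1 : Set (Euc n)) ∩ K := ⟨hqf, hq.2⟩
  have h3 : ((f q.1).1 : Set (Euc n)) ∩ K = ∅ := hq.1
  rw [h3] at this
  exact this

theorem chab_lower {Y : Type*} [TopologicalSpace Y] {f : Y → ChabautyPoint n}
    (hf : Continuous f) (y : Y) (x : Euc n) (hx : x ∈ (f y).1) (ε : ℝ) (hε : 0 < ε) :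
    ∀ᶠ y' in 𝓝 y, ∃ z ∈ (f y').1, dist z x < ε := by
  have hO : IsOpen {Γ : ChabautyPoint n | ((Γ.1 : Set (Euc n)) ∩ Metric.ball x ε).Nonempty} :=
    TopologicalSpace.isOpen_generateFrom_of_mem (Or.inr ⟨_, Metric.isOpen_ball, rfl⟩)
  have hy : f y ∈ {Γ : ChabautyPoint n | ((Γ.1 : Set (Euc n)) ∩ Metric.ball x ε).Nonempty} :=
    ⟨x, hx, Metric.mem_ball_self hε⟩
  filter_upwards [hf.continuousAt.eventually (hO.mem_nhds hy)] with y' ⟨z, hz, hzb⟩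
  exact ⟨z, hz, hzb⟩

/-- lower semicontinuity with an arbitrary neighbourhood, jointly with the parameter -/
theorem chab_lower' {Y : Type*} [TopologicalSpace Y] {f : Y → ChabautyPoint n}
    (hf : Continuous f) (y : Y) (x : Euc n) (hx : x ∈ (f y).1) (p : Y × Euc n → Prop)
    (hp : ∀ᶠ q in 𝓝 (y, x), p q) :
    ∀ᶠ y' in 𝓝 y, ∃ z ∈ (f y').1, p (y', z) := by
  rw [nhds_prod_eq, eventually_prod_iff] at hp
  obtain ⟨pa, hpa, pb, hpb, h⟩ := hp
  obtain ⟨ε, hε, hb⟩ := Metric.mem_nhds_iff.1 hpb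
  filter_upwards [chab_lower hf y x hx ε hε, hpa] with y' ⟨z, hz, hzx⟩ hy'
  exact ⟨z, hz, h hy' (hb hzx)⟩

/-! ### Expanding transversally to a subspace -/

/-- Inverse of the expansion with parameter `u`. -/
def expN (P F : Euc n →L[ℝ] Euc n) (u : ℝ) : Euc n →L[ℝ] Euc n :=
  F + u • (ContinuousLinearMap.id ℝ (Euc n) - P) - u ^ 2 • (F - P)

theorem expN_apply (P F : Euc n →L[ℝ] Euc n) (u : ℝ) (x : Euc n) :
    expN P F u x = F x + u • (x - P x) - u ^ 2 • (F x - P x) := by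
  simp [expN]

open Classical in
/-- The expansion of a group. -/
def expG (P F : Euc n →L[ℝ] Euc n) (u : ℝ) (Γ : ChabautyPoint n) : ChabautyPoint n :=
  if u = 0 then
    ⟨Γ.1.comap (F : Euc n →+ Euc n) ⊓ ((P : Euc n →+ Euc n).eqLocus (AddMonoidHom.id _)), by
      refine IsClosed.inter ?_ ?_
      · exact Γ.2.preimage F.continuous
      · exact isClosed_eq P.continuous continuous_id⟩
  else ⟨Γ.1.comap (expN P F u : Euc n →+ Euc n), Γ.2.preimage (expN P F u).continuous⟩

theorem mem_expG_zero (P F : Euc n →L[ℝ] Euc n) (Γ : ChabautyPoint n) (x : Euc n) :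
    x ∈ (expG P F 0 Γ).1 ↔ F x ∈ Γ.1 ∧ P x = x := by
  simp only [expG]
  rfl

theorem mem_expG_ne (P F : Euc n →L[ℝ] Euc n) {u : ℝ} (hu : u ≠ 0) (Γ : ChabautyPoint n)
    (x : Euc n) : x ∈ (expG P F u Γ).1 ↔ expN P F u x ∈ Γ.1 := by
  have h : expG P F u Γ = ⟨Γ.1.comap (expN P F u : Euc n →+ Euc n),
      Γ.2.preimage (expN P F u).continuous⟩ := if_neg hu
  rw [h]
  rfl

/-- The expansion map. -/
def expM (P F : Euc n →L[ℝ] Euc n) (u : ℝ) (z : Euc n) : Euc n :=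
  P z + u • (F z - P z) + u⁻¹ • (z - F z)

structure ProjRel (P F : Euc n →L[ℝ] Euc n) : Prop where
  pp : ∀ x, P (P x) = P x
  pf : ∀ x, P (F x) = P x
  fp : ∀ x, F (P x) = F x

theorem ProjRel.ff {P F : Euc n →L[ℝ] Euc n} (h : ProjRel P F) (x : Euc n) :
    F (F x) = F x := by rw [← h.fp (F x), h.pf, h.fp]

theorem expN_expM {P F : Euc n →L[ℝ] Euc n} (h : ProjRel P F) {u : ℝ} (hu : u ≠ 0)
    (z : Euc n) : expN P F u (expM P F u z) = z := by
  have hP : P (expM P F u z) = P z := by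
    simp [expM, h.pp, h.pf]
  have hF : F (expM P F u z) = F z := by
    rw [← h.fp, hP, h.fp]
  rw [expN_apply, hP, hF, expM]
  have : u • (P z + u • (F z - P z) + u⁻¹ • (z - F z) - P z)
    = u ^ 2 • (F z - P z) + (z - F z) := by
    rw [show P z + u • (F z - P z) + u⁻¹ • (z - F z) - P z
      = u • (F z - P z) + u⁻¹ • (z - F z) by abel, smul_add, smul_smul, smul_smul,
      mul_inv_cancel₀ hu, one_smul, sq]
  rw [this]
  abel

theorem expM_expN {P F : Euc n →L[ℝ] Euc n} (h : ProjRel P F) {u : ℝ} (hu : u ≠ 0)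
    (z : Euc n) : expM P F u (expN P F u z) = z := by
  have hP : P (expN P F u z) = P z := by
    simp [expN_apply, h.pp, h.pf]
  have hF : F (expN P F u z) = F z := by
    rw [← h.fp, hP, h.fp]
  rw [expM, hP, hF, expN_apply]
  have : u⁻¹ • (F z + u • (z - P z) - u ^ 2 • (F z - P z) - F z)
    = (z - P z) - u • (F z - P z) := by
    rw [show F z + u • (z - P z) - u ^ 2 • (F z - P z) - F z
      = u • (z - P z) - u ^ 2 • (F z - P z) by abel, smul_sub, smul_smul, smul_smul,
      inv_mul_cancel₀ hu, one_smul, sq, ← mul_assoc, inv_mul_cancel₀ hu, one_mul]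
  rw [this]
  abel

theorem expG_continuous {Y : Type*} [TopologicalSpace Y] (f : Y → ChabautyPoint n)
    (P : Euc n →L[ℝ] Euc n) (F : Y → Euc n →L[ℝ] Euc n) (u : Y → ℝ) (hf : Continuous f)
    (hF : Continuous F) (hu : Continuous u) (hrel : ∀ y, ProjRel P (F y))
    (gap : ∀ y0, ∃ R > 0, ∀ᶠ y in 𝓝 y0, ∀ z ∈ (f y).1, ‖z - F y z‖ < R → F y z = z) :
    Continuous (fun y => expG P (F y) (u y) (f y)) := by
  have hN : Continuous (fun q : Y × Euc n => expN P (F q.1) (u q.1) q.2) := by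
    simp only [expN_apply]
    fun_prop
  refine chab_continuous _ ?_ ?_
  · intro y x hx
    -- eventually the image under `expN` avoids the group unless `u y = 0` and ...
    by_cases hmem : expN P (F y) (u y) x ∈ (f y).1
    · -- then `u y = 0` and `P x ≠ x`
      have hu0 : u y = 0 := by
        by_contra h
        exact hx ((mem_expG_ne P (F y) h (f y) x).2 hmem)
      have hPx : P x ≠ x := by
        intro h
        apply hx
        rw [hu0, mem_expG_zero]
        rw [hu0, expN_apply] at hmem
        exact ⟨by simpa using hmem, h⟩
      obtain ⟨R, hR, hgap⟩ := gap y
      have hgap' : ∀ᶠ q : Y × Euc n in 𝓝 (y, x), ∀ z ∈ (f q.1).1, ‖z - F q.1 z‖ < R →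
          F q.1 z = z :=
        (continuous_fst.continuousAt (x := ((y, x) : Y × Euc n))).eventually hgap
      let g : Y × Euc n → Euc n := fun q => (q.2 - P q.2) - u q.1 • (F q.1 q.2 - P q.2)
      have hg : Continuous g := by simp only [g]; fun_prop
      have hg0 : g (y, x) ≠ 0 := by
        simp only [g, hu0, zero_smul, sub_zero]
        exact fun h => hPx (sub_eq_zero.1 h).symm
      have hgne : ∀ᶠ q in 𝓝 (y, x), g q ≠ 0 := hg.continuousAt.eventually_ne hg0
      have hPne : ∀ᶠ q : Y × Euc n in 𝓝 (y, x), P q.2 ≠ q.2 := by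
        have : Continuous (fun q : Y × Euc n => P q.2 - q.2) := by fun_prop
        filter_upwards [this.continuousAt.eventually_ne (sub_ne_zero.2 hPx)] with q hq
        exact sub_ne_zero.1 hq
      have hsm : ∀ᶠ q : Y × Euc n in 𝓝 (y, x), ‖u q.1 • g q‖ < R := by
        have hc : Continuous (fun q : Y × Euc n => ‖u q.1 • g q‖) := by fun_prop
        apply hc.continuousAt.eventually_lt continuousAt_const
        simp [hu0, hR]
      filter_upwards [hgap', hgne, hPne, hsm] with q h1 h2 h3 h4 hq
      by_cases huq : u q.1 = 0
      · rw [huq, mem_expG_zero] at hq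
        exact h3 hq.2
      · rw [mem_expG_ne _ _ huq] at hq
        have hPN : P (expN P (F q.1) (u q.1) q.2) = P q.2 := by
          simp [expN_apply, (hrel q.1).pp, (hrel q.1).pf]
        have hFN : F q.1 (expN P (F q.1) (u q.1) q.2) = F q.1 q.2 := by
          rw [← (hrel q.1).fp, hPN, (hrel q.1).fp]
        have e : expN P (F q.1) (u q.1) q.2 - F q.1 (expN P (F q.1) (u q.1) q.2)
            = u q.1 • g q := by
          rw [hFN, expN_apply]
          simp only [g]
          module
        have h5 := h1 _ hq (by rw [e]; exact h4)
        have h6 : u q.1 • g q = 0 := by rw [← e, h5, sub_self]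
        rcases smul_eq_zero.1 h6 with h | h
        · exact huq h
        · exact h2 h
    · have h1 := chab_closed hf y _ hmem
      have hc : Continuous (fun q : Y × Euc n => (q.1, expN P (F q.1) (u q.1) q.2)) := by
        fun_prop
      have h2 := (hc.continuousAt (x := (y, x))).eventually h1
      filter_upwards [h2] with q hq hq'
      by_cases huq : u q.1 = 0
      · rw [huq, mem_expG_zero] at hq'
        apply hq
        simp only [huq, expN_apply]
        simpa using hq'.1
      · rw [mem_expG_ne _ _ huq] at hq'
        exact hq hq'
  · intro y x hx ε hε
    by_cases huy : u y = 0
    · rw [huy, mem_expG_zero] at hx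
      obtain ⟨hxf, hPx⟩ := hx
      obtain ⟨R, hR, hgap⟩ := gap y
      let g : Y × Euc n → Euc n := fun q => P q.2 + u q.1 • (F q.1 q.2 - P q.2)
      have hg : Continuous g := by simp only [g]; fun_prop
      have hg0 : g (y, F y x) = x := by
        simp only [g, huy, zero_smul, add_zero, (hrel y).pf, hPx]
      have hev : ∀ᶠ q in 𝓝 (y, F y x), dist (g q) x < ε ∧ ‖q.2 - F q.1 q.2‖ < R := by
        apply Filter.Eventually.and
        · have : Continuous (fun q => dist (g q) x) := by fun_prop
          apply this.continuousAt.eventually_lt continuousAt_const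
          rw [hg0, dist_self]; exact hε
        · have hc : Continuous (fun q : Y × Euc n => ‖q.2 - F q.1 q.2‖) := by fun_prop
          apply hc.continuousAt.eventually_lt continuousAt_const
          simp [(hrel y).ff, hR]
      filter_upwards [chab_lower' hf y _ hxf _ hev, hgap] with y' ⟨z, hz, hzd, hzR⟩ hgy
      have hFz : F y' z = z := hgy z hz hzR
      refine ⟨g (y', z), ?_, hzd⟩
      by_cases huq : u y' = 0
      · rw [huq, mem_expG_zero]
        simp only [g, huq, zero_smul, add_zero, (hrel y').fp, (hrel y').pp, hFz, hz, and_self]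
      · rw [mem_expG_ne _ _ huq]
        have : g (y', z) = expM P (F y') (u y') z := by
          simp only [g, expM, hFz, sub_self, smul_zero, add_zero]
        rw [this, expN_expM (hrel y') huq]
        exact hz
    · rw [mem_expG_ne _ _ huy] at hx
      have hune : ∀ᶠ y' in 𝓝 y, u y' ≠ 0 := hu.continuousAt.eventually_ne huy
      have hc : ContinuousAt (fun q : Y × Euc n => dist (expM P (F q.1) (u q.1) q.2) x)
          (y, expN P (F y) (u y) x) := by
        simp only [expM]
        have hi : ContinuousAt (fun q : Y × Euc n => (u q.1)⁻¹) (y, expN P (F y) (u y) x) :=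
          ContinuousAt.inv₀ (by fun_prop) huy
        fun_prop
      have hev : ∀ᶠ q : Y × Euc n in 𝓝 (y, expN P (F y) (u y) x),
          dist (expM P (F q.1) (u q.1) q.2) x < ε := by
        apply hc.eventually_lt continuousAt_const
        simp only
        rw [expM_expN (hrel y) huy, dist_self]
        exact hε
      filter_upwards [chab_lower' hf y _ hx _ hev, hune] with y' ⟨z, hz, hzd⟩ huq
      refine ⟨_, ?_, hzd⟩
      rw [mem_expG_ne _ _ huq, expN_expM (hrel y') huq]
      exact hz

theorem expG_one (P F : Euc n →L[ℝ] Euc n) (Γ : ChabautyPoint n) :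
    expG P F 1 Γ = Γ := by
  apply chab_ext
  intro x
  rw [mem_expG_ne _ _ one_ne_zero, expN_apply]
  have : F x + (1:ℝ) • (x - P x) - (1:ℝ) ^ 2 • (F x - P x) = x := by
    rw [one_pow, one_smul, one_smul]; abel
  rw [this]

end Chab
section Sets
open Topology Filter unitInterval

variable {n : ℕ}

/-- Discrete subgroups. -/
def Dset (n : ℕ) : Set (ChabautyPoint n) := {Γ | ∃ r > 0, ∀ x ∈ Γ.1, ‖x‖ < r → x = 0}

theorem exists_nat_mul_between {s R : ℝ} (hs : 0 < s) (hsR : s < R) :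
    ∃ m : ℕ, R ≤ m * s ∧ m * s ≤ 2 * R := by
  refine ⟨⌈R / s⌉₊, ?_, ?_⟩
  · have := Nat.le_ceil (R / s)
    rwa [div_le_iff₀ hs] at this
  · have := Nat.ceil_lt_add_one (a := R / s) (div_nonneg (by linarith) hs.le)
    have h2 : (⌈R / s⌉₊ : ℝ) * s ≤ (R / s + 1) * s := by gcongr
    have h3 : (R / s + 1) * s = R + s := by field_simp
    linarith

theorem Dset_gap (Γ : ChabautyPoint n) (hΓ : Γ ∈ Dset n) : ∃ R > 0, ∀ᶠ Γ' : ChabautyPoint n in 𝓝 Γ,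
    ∀ z ∈ Γ'.1, ‖z‖ < R → z = 0 := by
  obtain ⟨r, hr, h⟩ := hΓ
  let K : Set (Euc n) := Metric.closedBall 0 (2 * (r / 4)) \ Metric.ball 0 (r / 4)
  have hK : IsCompact K := (isCompact_closedBall _ _).diff Metric.isOpen_ball
  have hO : IsOpen {Γ : ChabautyPoint n | ((Γ.1 : Set (Euc n)) ∩ K) = ∅} :=
    TopologicalSpace.isOpen_generateFrom_of_mem (Or.inl ⟨K, hK, rfl⟩)
  have hy : Γ ∈ {Γ : ChabautyPoint n | ((Γ.1 : Set (Euc n)) ∩ K) = ∅} := by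
    show (Γ.1 : Set (Euc n)) ∩ K = ∅
    ext z
    simp only [Set.mem_inter_iff, Set.mem_empty_iff_false, iff_false, not_and]
    intro hz hzK
    have h1 : ‖z‖ ≤ 2 * (r / 4) := by simpa [K] using hzK.1
    have h2 : ¬ ‖z‖ < r / 4 := by simpa [K] using hzK.2
    have := h z hz (by linarith)
    rw [this, norm_zero] at h2
    exact h2 (by linarith)
  refine ⟨r / 4, by linarith, ?_⟩
  filter_upwards [hO.mem_nhds hy] with Γ' hΓ' z hz hzr
  by_contra hne
  have hpos : 0 < ‖z‖ := norm_pos_iff.2 hne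
  obtain ⟨m, hm1, hm2⟩ := exists_nat_mul_between hpos hzr
  have hmz : m • z ∈ Γ'.1 := AddSubgroup.nsmul_mem _ hz m
  have hnorm : ‖m • z‖ = m * ‖z‖ := by
    rw [← Nat.cast_smul_eq_nsmul ℝ, norm_smul]; simp
  have : m • z ∈ (Γ'.1 : Set (Euc n)) ∩ K := by
    refine ⟨hmz, ?_, ?_⟩
    · simpa [hnorm] using hm2
    · simpa [hnorm] using hm1
  have h3 : (Γ'.1 : Set (Euc n)) ∩ K = ∅ := hΓ'
  rw [h3] at this
  exact this

theorem projRel_zero : ProjRel (0 : Euc n →L[ℝ] Euc n) 0 := ⟨by simp, by simp, by simp⟩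

/-- The trivial subgroup. -/
def zeroPt (n : ℕ) : ChabautyPoint n := ⟨⊥, by simp⟩

theorem D_contr_continuous :
    Continuous (fun z : Dset n × I => expG 0 0 (1 - (z.2 : ℝ)) z.1.1) := by
  refine expG_continuous (fun z : Dset n × I => z.1.1) 0 (fun _ => 0) (fun z => 1 - (z.2 : ℝ))
    (by fun_prop) (by fun_prop) (by fun_prop) (fun _ => projRel_zero) ?_
  intro y0
  obtain ⟨R, hR, h⟩ := Dset_gap y0.1.1 y0.1.2
  refine ⟨R, hR, ?_⟩
  have hc : Continuous (fun z : Dset n × I => z.1.1) := by fun_prop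
  filter_upwards [hc.continuousAt.eventually h] with y hy z hz hzR
  simp only [ContinuousLinearMap.zero_apply, sub_zero] at hzR ⊢
  exact (hy z hz hzR).symm

theorem D_contr_one (Γ : ChabautyPoint n) : expG 0 0 0 Γ = zeroPt n := by
  apply chab_ext
  intro x
  rw [mem_expG_zero]
  simp only [zeroPt, AddSubgroup.mem_bot]
  exact ⟨fun h => h.2.symm, fun h => ⟨Γ.1.zero_mem, h.symm⟩⟩

theorem expG_mem_D {P F : Euc n →L[ℝ] Euc n} (h : ProjRel P F) (u : ℝ) {Γ : ChabautyPoint n}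
    (hΓ : Γ ∈ Dset n) : expG P F u Γ ∈ Dset n := by
  obtain ⟨r, hr, hD⟩ := hΓ
  have key : ∀ (N : Euc n →L[ℝ] Euc n), ∃ r' > 0, ∀ x, ‖x‖ < r' → ‖N x‖ < r := by
    intro N
    have : ∀ᶠ x in 𝓝 (0 : Euc n), ‖N x‖ < r := by
      have hc : Continuous (fun x => ‖N x‖) := by fun_prop
      apply hc.continuousAt.eventually_lt continuousAt_const
      simpa using hr
    obtain ⟨ε, hε, hb⟩ := Metric.eventually_nhds_iff.1 this
    exact ⟨ε, hε, fun x hx => hb (by simpa using hx)⟩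
  by_cases hu : u = 0
  · obtain ⟨r', hr', hN⟩ := key F
    refine ⟨r', hr', fun x hx hxr => ?_⟩
    rw [hu, mem_expG_zero] at hx
    have := hD _ hx.1 (hN x hxr)
    rw [← hx.2, ← h.pf, this, map_zero]
  · obtain ⟨r', hr', hN⟩ := key (expN P F u)
    refine ⟨r', hr', fun x hx hxr => ?_⟩
    rw [mem_expG_ne _ _ hu] at hx
    have := hD _ hx (hN x hxr)
    rw [← expM_expN h hu x, this]
    simp [expM]

/-- Cocompact subgroups of the subspace `V`. -/
def Eset (V : Submodule ℝ (Euc n)) : Set (ChabautyPoint n) :=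
  {Γ | (∀ x ∈ Γ.1, x ∈ V) ∧ V ≤ Submodule.span ℝ (Γ.1 : Set (Euc n))}

/-- A subspace as a point of the Chabauty space. -/
def subPt (V : Submodule ℝ (Euc n)) : ChabautyPoint n :=
  ⟨V.toAddSubgroup, V.closed_of_finiteDimensional⟩

open Classical in
/-- Shrinking a cocompact subgroup of `V`. -/
def shr (V : Submodule ℝ (Euc n)) (u : ℝ) (Γ : ChabautyPoint n) : ChabautyPoint n :=
  if u = 0 then subPt V
  else ⟨Γ.1.comap ((u⁻¹ • ContinuousLinearMap.id ℝ (Euc n) : Euc n →L[ℝ] Euc n) : Euc n →+ Euc n),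
    Γ.2.preimage (u⁻¹ • ContinuousLinearMap.id ℝ (Euc n) : Euc n →L[ℝ] Euc n).continuous⟩

theorem mem_shr_zero (V : Submodule ℝ (Euc n)) (Γ : ChabautyPoint n) (x : Euc n) :
    x ∈ (shr V 0 Γ).1 ↔ x ∈ V := by
  have h : shr V 0 Γ = subPt V := if_pos rfl
  rw [h]
  rfl

theorem mem_shr_ne (V : Submodule ℝ (Euc n)) {u : ℝ} (hu : u ≠ 0) (Γ : ChabautyPoint n)
    (x : Euc n) : x ∈ (shr V u Γ).1 ↔ u⁻¹ • x ∈ Γ.1 := by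
  have h : shr V u Γ = _ := if_neg hu
  rw [h]
  rfl

theorem shr_sub {V : Submodule ℝ (Euc n)} {Γ : ChabautyPoint n} (hΓ : Γ ∈ Eset V) (u : ℝ)
    (x : Euc n) (hx : x ∈ (shr V u Γ).1) : x ∈ V := by
  by_cases hu : u = 0
  · rw [hu, mem_shr_zero] at hx
    exact hx
  · rw [mem_shr_ne V hu] at hx
    have := hΓ.1 _ hx
    have h2 := V.smul_mem u this
    rwa [smul_smul, mul_inv_cancel₀ hu, one_smul] at h2

theorem shr_continuous {Y : Type*} [TopologicalSpace Y] (V : Submodule ℝ (Euc n))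
    (f : Y → ChabautyPoint n) (u : Y → ℝ) (hf : Continuous f) (hu : Continuous u)
    (hE : ∀ y, f y ∈ Eset V) : Continuous (fun y => shr V (u y) (f y)) := by
  refine chab_continuous _ ?_ ?_
  · intro y x hx
    by_cases hxV : x ∈ V
    · have huy : u y ≠ 0 := by
        intro h
        rw [h, mem_shr_zero] at hx
        exact hx hxV
      rw [mem_shr_ne V huy] at hx
      have h1 := chab_closed hf y _ hx
      have hc : ContinuousAt (fun q : Y × Euc n => (q.1, (u q.1)⁻¹ • q.2)) (y, x) := by
        have hi : ContinuousAt (fun q : Y × Euc n => (u q.1)⁻¹) (y, x) :=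
          ContinuousAt.inv₀ (by fun_prop) huy
        fun_prop
      have hune : ∀ᶠ q : Y × Euc n in 𝓝 (y, x), u q.1 ≠ 0 :=
        (by fun_prop : Continuous (fun q : Y × Euc n => u q.1)).continuousAt.eventually_ne huy
      filter_upwards [hc.eventually h1, hune] with q h1 h2 h3
      rw [mem_shr_ne V h2] at h3
      exact h1 h3
    · have hO : IsOpen {q : Y × Euc n | q.2 ∉ V} :=
        (V.closed_of_finiteDimensional.isOpen_compl).preimage continuous_snd
      filter_upwards [hO.mem_nhds hxV] with q hq hq'
      exact hq (shr_sub (hE q.1) _ _ hq')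
  · intro y x hx
    by_cases huy : u y = 0
    · rw [huy, mem_shr_zero] at hx
      have hspan := (hE y).2 hx
      have hzero : ∀ y', (0 : Euc n) ∈ (shr V (u y') (f y')).1 := fun _ => zero_mem _
      -- a bounded multiple trick
      have gen : ∀ v ∈ (f y).1, ∀ c : ℝ, ∀ ε > 0, ∀ᶠ y' in 𝓝 y,
          ∃ z ∈ (shr V (u y') (f y')).1, dist z (c • v) < ε := by
        intro v hv c ε hε
        have hc : Continuous (fun q : Y × Euc n => |u q.1| * ‖q.2‖ + |c| * ‖q.2 - v‖) := by fun_prop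
        have hev : ∀ᶠ q : Y × Euc n in 𝓝 (y, v), |u q.1| * ‖q.2‖ + |c| * ‖q.2 - v‖ < ε := by
          apply hc.continuousAt.eventually_lt continuousAt_const
          simpa [huy] using hε
        filter_upwards [chab_lower' hf y v hv _ hev] with y' ⟨z, hz, hzε⟩
        change |u y'| * ‖z‖ + |c| * ‖z - v‖ < ε at hzε
        by_cases hu' : u y' = 0
        · refine ⟨c • z, ?_, ?_⟩
          · rw [hu', mem_shr_zero]
            exact V.smul_mem _ ((hE y').1 z hz)
          · rw [dist_eq_norm, ← smul_sub, norm_smul, Real.norm_eq_abs]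
            have : 0 ≤ |u y'| * ‖z‖ := by positivity
            linarith
        · refine ⟨(u y' * round (c / u y')) • z, ?_, ?_⟩
          · rw [mem_shr_ne V hu', smul_smul, ← mul_assoc, inv_mul_cancel₀ hu', one_mul,
              Int.cast_smul_eq_zsmul]
            exact AddSubgroup.zsmul_mem _ hz _
          · have e : (u y' * round (c / u y')) • z - c • v =
                (u y' * round (c / u y') - c) • z + c • (z - v) := by module
            have hb : |u y' * round (c / u y') - c| ≤ |u y'| := by
              have h1 := abs_sub_round (c / u y')
              have h2 : u y' * round (c / u y') - c = - (u y' * (c / u y' - round (c / u y'))) := by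
                field_simp; ring
              rw [h2, abs_neg, abs_mul]
              nlinarith [abs_nonneg (u y')]
            rw [dist_eq_norm, e]
            refine lt_of_le_of_lt (norm_add_le _ _) (lt_of_le_of_lt ?_ hzε)
            rw [norm_smul, norm_smul, Real.norm_eq_abs, Real.norm_eq_abs]
            gcongr
      have gen' : ∀ c : ℝ, ∀ ε > 0, ∀ᶠ y' in 𝓝 y,
          ∃ z ∈ (shr V (u y') (f y')).1, dist z (c • x) < ε := by
        refine Submodule.span_induction (p := fun x _ => ∀ c : ℝ, ∀ ε > 0, ∀ᶠ y' in 𝓝 y,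
          ∃ z ∈ (shr V (u y') (f y')).1, dist z (c • x) < ε) ?_ ?_ ?_ ?_ hspan
        · intro v hv c
          exact gen v hv c
        · intro c ε hε
          filter_upwards with y'
          exact ⟨0, zero_mem _, by simpa using hε⟩
        · intro v w _ _ hv hw c ε hε
          filter_upwards [hv c (ε/2) (by positivity), hw c (ε/2) (by positivity)] with
            y' ⟨z, hz, hz'⟩ ⟨t, ht, ht'⟩
          refine ⟨z + t, add_mem hz ht, ?_⟩
          rw [smul_add]
          have := dist_add_add_le z t (c • v) (c • w)
          linarith
        · intro a v _ hv c ε hε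
          rw [smul_smul]
          exact hv _ ε hε
      intro ε hε
      simpa using gen' 1 ε hε
    · intro ε hε
      rw [mem_shr_ne V huy] at hx
      have hev : ∀ᶠ q : Y × Euc n in 𝓝 (y, (u y)⁻¹ • x), dist (u q.1 • q.2) x < ε := by
        have hc : Continuous (fun q : Y × Euc n => dist (u q.1 • q.2) x) := by fun_prop
        apply hc.continuousAt.eventually_lt continuousAt_const
        simpa [smul_smul, mul_inv_cancel₀ huy] using hε
      filter_upwards [chab_lower' hf y _ hx _ hev, hu.continuousAt.eventually_ne huy] with
        y' ⟨z, hz, hzε⟩ hu'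
      refine ⟨u y' • z, ?_, hzε⟩
      rw [mem_shr_ne V hu', smul_smul, inv_mul_cancel₀ hu', one_smul]
      exact hz

theorem shr_one (V : Submodule ℝ (Euc n)) (Γ : ChabautyPoint n) : shr V 1 Γ = Γ := by
  apply chab_ext
  intro x
  rw [mem_shr_ne V one_ne_zero]
  simp

theorem shr_zero (V : Submodule ℝ (Euc n)) (Γ : ChabautyPoint n) : shr V 0 Γ = subPt V :=
  if_pos rfl

/-- Paths in `Eset V` with the same ends are homotopic. -/
theorem Eset_paths (V : Submodule ℝ (Euc n)) {a b : ChabautyPoint n} (p q : Path a b)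
    (hp : ∀ t, p t ∈ Eset V) (hq : ∀ t, q t ∈ Eset V) :
    Path.Homotopic.Quotient.mk p = Path.Homotopic.Quotient.mk q := by
  refine contr_paths (S := Eset V) (fun z => shr V (1 - (z.2 : ℝ)) z.1.1) ?_ (subPt V) ?_ ?_
    p q hp hq
  · exact shr_continuous V (fun z : Eset V × I => z.1.1) (fun z => 1 - (z.2 : ℝ)) (by fun_prop)
      (by fun_prop) (fun z => z.1.2)
  · intro s; simp [shr_one]
  · intro s; simp [shr_zero]

/-- Some lattice in `V`. -/
theorem exists_lattice (V : Submodule ℝ (Euc n)) : ∃ Γ, Γ ∈ Eset V ∧ Γ ∈ Dset n := by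
  let b := stdOrthonormalBasis ℝ V
  let A : AddSubgroup (Euc n) := V.toAddSubgroup ⊓ ⨅ i, (AddMonoidHom.range (Int.castAddHom ℝ)).comap
    ((innerSL ℝ (b i : Euc n) : Euc n →L[ℝ] ℝ) : Euc n →+ ℝ)
  have hA : ∀ x, x ∈ A ↔ x ∈ V ∧ ∀ i, ∃ m : ℤ, (m : ℝ) = inner ℝ (b i : Euc n) x := by
    intro x
    simp only [A, AddSubgroup.mem_inf, AddSubgroup.mem_iInf]
    rfl
  have hcl : IsClosed (A : Set (Euc n)) := by
    have : (A : Set (Euc n)) = (V : Set (Euc n)) ∩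
        ⋂ i, (fun x => inner ℝ (b i : Euc n) x) ⁻¹' (Set.range ((↑) : ℤ → ℝ)) := by
      ext x
      simp only [SetLike.mem_coe, hA, Set.mem_inter_iff, Set.mem_iInter, Set.mem_preimage,
        Set.mem_range]
    rw [this]
    refine V.closed_of_finiteDimensional.inter (isClosed_iInter fun i => ?_)
    exact Int.isClosedEmbedding_coe_real.isClosed_range.preimage (by fun_prop)
  refine ⟨⟨A, hcl⟩, ⟨fun x hx => ((hA x).1 hx).1, ?_⟩, 1, one_pos, ?_⟩
  · intro x hx
    have hs := b.sum_repr ⟨x, hx⟩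
    have hx' : x = ∑ i, b.repr ⟨x, hx⟩ i • (b i : Euc n) := by
      have := congrArg (Subtype.val) hs
      simpa using this.symm
    rw [hx']
    refine Submodule.sum_mem _ fun i _ => Submodule.smul_mem _ _ (Submodule.subset_span ?_)
    rw [SetLike.mem_coe, hA]
    refine ⟨(b i).2, fun j => ?_⟩
    have := orthonormal_iff_ite.1 b.orthonormal j i
    rw [Submodule.coe_inner] at this
    rw [this]
    split_ifs
    · exact ⟨1, by simp⟩
    · exact ⟨0, by simp⟩
  · intro x hx hx1
    obtain ⟨hxV, hm⟩ := (hA x).1 hx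
    have hz : ∀ i, inner ℝ (b i : Euc n) x = 0 := by
      intro i
      obtain ⟨m, hm⟩ := hm i
      have h1 : |(inner ℝ (b i : Euc n) x : ℝ)| ≤ ‖(b i : Euc n)‖ * ‖x‖ := abs_real_inner_le_norm _ _
      have h2 : ‖(b i : Euc n)‖ = 1 := b.orthonormal.1 i
      rw [h2, one_mul, ← hm] at h1
      have h3 : |(m : ℝ)| < 1 := lt_of_le_of_lt h1 hx1
      have h4 : |m| < 1 := by exact_mod_cast h3
      have h5 : m = 0 := Int.abs_lt_one_iff.1 h4
      rw [← hm, h5, Int.cast_zero]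
    have : (⟨x, hxV⟩ : V) = 0 := by
      rw [← b.sum_repr' ⟨x, hxV⟩]
      refine Finset.sum_eq_zero fun i _ => ?_
      rw [Submodule.coe_inner]
      simp [hz]
    simpa using congrArg Subtype.val this

end Sets

section Lattices
open Topology Filter unitInterval Matrix

variable {n : ℕ}

theorem matrix_path {ι : Type*} [Fintype ι] [DecidableEq ι] (M : Matrix ι ι ℝ) (hM : M.det ≠ 0) :
    ∃ γ : I → Matrix ι ι ℝ, Continuous γ ∧ (∀ s, (γ s).det ≠ 0) ∧ γ 1 = M ∧
      ∃ ε : ι → ℤ, (∀ i, ε i * ε i = 1) ∧ γ 0 = diagonal (fun i => (ε i : ℝ)) := by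
  refine Matrix.diagonal_transvection_induction_of_det_ne_zero (fun M =>
    ∃ γ : I → Matrix ι ι ℝ, Continuous γ ∧ (∀ s, (γ s).det ≠ 0) ∧ γ 1 = M ∧
      ∃ ε : ι → ℤ, (∀ i, ε i * ε i = 1) ∧ γ 0 = diagonal (fun i => (ε i : ℝ))) M hM ?_ ?_ ?_
  · intro D hD
    have hD' : ∀ i, D i ≠ 0 := by
      intro i h
      apply hD
      rw [det_diagonal]
      exact Finset.prod_eq_zero (Finset.mem_univ i) h
    refine ⟨fun s => diagonal (fun i => (1 - (s : ℝ)) * ((SignType.sign (D i) : ℤ) : ℝ) + s * D i),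
      ?_, ?_, ?_, fun i => (SignType.sign (D i) : ℤ), ?_, ?_⟩
    · refine Continuous.matrix_diagonal ?_
      fun_prop
    · intro s
      rw [det_diagonal, Finset.prod_ne_zero_iff]
      intro i _
      have h0 : (0 : ℝ) ≤ s := s.2.1
      have h1 : (s : ℝ) ≤ 1 := s.2.2
      rcases lt_or_gt_of_ne (hD' i) with h | h
      · rw [sign_neg h]
        simp only [SignType.coe_neg_one, Int.cast_neg, Int.cast_one]
        rcases eq_or_lt_of_le h0 with h2 | h2
        · rw [← h2]; norm_num
        · nlinarith
      · rw [sign_pos h]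
        simp only [SignType.coe_one, Int.cast_one]
        rcases eq_or_lt_of_le h0 with h2 | h2
        · rw [← h2]; norm_num
        · nlinarith [mul_pos h2 h]
    · simp
    · intro i
      beta_reduce
      rcases lt_or_gt_of_ne (hD' i) with h | h
      · rw [sign_neg h]; rfl
      · rw [sign_pos h]; rfl
    · simp
  · intro t
    refine ⟨fun s => transvection t.i t.j (s * t.c), ?_, ?_, ?_, fun _ => 1, ?_, ?_⟩
    · unfold transvection
      have : ∀ s : I, Matrix.single t.i t.j ((s : ℝ) * t.c) = (s : ℝ) • Matrix.single t.i t.j t.c := by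
        intro s; simp
      simp_rw [this]
      fun_prop
    · intro s
      rw [det_transvection_of_ne _ _ t.hij]
      exact one_ne_zero
    · simp [TransvectionStruct.toMatrix]
    · intro i; rfl
    · simp
  · intro A B hA hB ihA ihB
    obtain ⟨γ, h1, h2, h3, ε, h4, h5⟩ := ihA
    obtain ⟨γ', h1', h2', h3', ε', h4', h5'⟩ := ihB
    refine ⟨fun s => γ s * γ' s, h1.matrix_mul h1', ?_, ?_, fun i => ε i * ε' i, ?_, ?_⟩
    · intro s
      rw [det_mul]
      exact mul_ne_zero (h2 s) (h2' s)
    · simp only [h3, h3']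
    · intro i
      calc ε i * ε' i * (ε i * ε' i) = (ε i * ε i) * (ε' i * ε' i) := by ring
        _ = 1 := by rw [h4, h4']; rfl
    · simp only [h5, h5', diagonal_mul_diagonal]
      congr 1
      ext i
      push_cast
      rfl

variable (V : Submodule ℝ (Euc n))

/-- Orthonormal coordinates on `V`. -/
def crd (x : Euc n) (k : Fin (Module.finrank ℝ V)) : ℝ :=
  inner ℝ (stdOrthonormalBasis ℝ V k : Euc n) x

/-- The vector with given coordinates. -/
def vcc (y : Fin (Module.finrank ℝ V) → ℝ) : Euc n :=
  ∑ k, y k • (stdOrthonormalBasis ℝ V k : Euc n)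

theorem vcc_mem (y) : vcc V y ∈ V :=
  Submodule.sum_mem _ fun k _ => V.smul_mem _ (stdOrthonormalBasis ℝ V k).2

theorem crd_continuous : Continuous (crd V) := by
  unfold crd
  fun_prop

theorem vcc_continuous : Continuous (vcc V) := by
  unfold vcc
  fun_prop

theorem crd_vcc (y) : crd V (vcc V y) = y := by
  ext k
  have h := orthonormal_iff_ite.1 (stdOrthonormalBasis ℝ V).orthonormal
  simp only [Submodule.coe_inner] at h
  simp [crd, vcc, inner_sum, inner_smul_right, h]

theorem vcc_crd {x : Euc n} (hx : x ∈ V) : vcc V (crd V x) = x := by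
  have := congrArg Subtype.val ((stdOrthonormalBasis ℝ V).sum_repr' ⟨x, hx⟩)
  simpa [crd, vcc] using this

theorem crd_add (x y) : crd V (x + y) = crd V x + crd V y := by
  ext k
  simp [crd, inner_add_right]

theorem crd_neg (x) : crd V (-x) = - crd V x := by
  ext k
  simp [crd]

theorem vcc_sum {J : Type*} (s : Finset J) (f : J → _) (c : J → ℝ) :
    vcc V (∑ j ∈ s, c j • f j) = ∑ j ∈ s, c j • vcc V (f j) := by
  simp only [vcc, Finset.sum_apply, Pi.smul_apply, smul_eq_mul, Finset.sum_smul, Finset.smul_sum,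
    smul_smul]
  exact Finset.sum_comm

/-- The lattice in `V` given by the matrix `N`. -/
def latM (N : Matrix (Fin (Module.finrank ℝ V)) (Fin (Module.finrank ℝ V)) ℝ) : ChabautyPoint n :=
  ⟨{ carrier := {x | x ∈ V ∧ ∀ i, (N *ᵥ crd V x) i ∈ Set.range ((↑) : ℤ → ℝ)}
     zero_mem' := ⟨V.zero_mem, fun i => ⟨0, by
      have : crd V 0 = 0 := by ext k; simp [crd]
      simp [this]⟩⟩
     add_mem' := by
      rintro x y ⟨hx, hx'⟩ ⟨hy, hy'⟩
      refine ⟨V.add_mem hx hy, fun i => ?_⟩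
      obtain ⟨a, ha⟩ := hx' i
      obtain ⟨b, hb⟩ := hy' i
      exact ⟨a + b, by rw [crd_add, mulVec_add]; push_cast; rw [ha, hb]; rfl⟩
     neg_mem' := by
      rintro x ⟨hx, hx'⟩
      refine ⟨V.neg_mem hx, fun i => ?_⟩
      obtain ⟨a, ha⟩ := hx' i
      exact ⟨-a, by rw [crd_neg, mulVec_neg]; push_cast; rw [ha]; rfl⟩ }, by
    change IsClosed {x | x ∈ V ∧ ∀ i, (N *ᵥ crd V x) i ∈ Set.range ((↑) : ℤ → ℝ)}
    have : {x | x ∈ V ∧ ∀ i, (N *ᵥ crd V x) i ∈ Set.range ((↑) : ℤ → ℝ)} = (V : Set (Euc n)) ∩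
        ⋂ i, (fun x => (N *ᵥ crd V x) i) ⁻¹' (Set.range ((↑) : ℤ → ℝ)) := by
      ext x
      simp
    rw [this]
    refine V.closed_of_finiteDimensional.inter (isClosed_iInter fun i => ?_)
    refine Int.isClosedEmbedding_coe_real.isClosed_range.preimage ?_
    exact (continuous_apply i).comp (continuous_const.matrix_mulVec (crd_continuous V))⟩

theorem mem_latM (N) (x : Euc n) :
    x ∈ (latM V N).1 ↔ x ∈ V ∧ ∀ i, (N *ᵥ crd V x) i ∈ Set.range ((↑) : ℤ → ℝ) := Iff.rfl

variable {V}

theorem latM_mem_E {N} (hN : det N ≠ 0) : latM V N ∈ Eset V := by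
  refine ⟨fun x hx => hx.1, ?_⟩
  intro x hx
  have hu : IsUnit N.det := isUnit_iff_ne_zero.2 hN
  have e : x = ∑ j, (N *ᵥ crd V x) j • vcc V (N⁻¹ *ᵥ Pi.single j 1) := by
    rw [← vcc_sum]
    have : ∑ j, (N *ᵥ crd V x) j • (N⁻¹ *ᵥ Pi.single j 1) = crd V x := by
      simp_rw [← mulVec_smul]
      rw [← mulVec_sum]
      have : ∑ j, (N *ᵥ crd V x) j • (Pi.single j 1 : Fin (Module.finrank ℝ V) → ℝ)
          = N *ᵥ crd V x := by
        ext k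
        simp [Pi.single_apply]
      rw [this, mulVec_mulVec, nonsing_inv_mul _ hu, one_mulVec]
    rw [this, vcc_crd V hx]
  rw [e]
  refine Submodule.sum_mem _ fun j _ => Submodule.smul_mem _ _ (Submodule.subset_span ?_)
  rw [SetLike.mem_coe, mem_latM]
  refine ⟨vcc_mem V _, fun i => ?_⟩
  rw [crd_vcc, mulVec_mulVec, mul_nonsing_inv _ hu, one_mulVec, Pi.single_apply]
  split_ifs
  · exact ⟨1, by simp⟩
  · exact ⟨0, by simp⟩

theorem latM_mem_D {N} (hN : det N ≠ 0) : latM V N ∈ Dset n := by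
  have hu : IsUnit N.det := isUnit_iff_ne_zero.2 hN
  have hcrd0 : crd V 0 = 0 := by ext k; simp [crd]
  have hev : ∀ᶠ x in 𝓝 (0 : Euc n), ∀ i, |(N *ᵥ crd V x) i| < 1 := by
    rw [eventually_all]
    intro i
    have hc : Continuous (fun x => |(N *ᵥ crd V x) i|) :=
      ((continuous_apply i).comp (continuous_const.matrix_mulVec (crd_continuous V))).abs
    apply hc.continuousAt.eventually_lt continuousAt_const
    simp [hcrd0]
  obtain ⟨r, hr, hb⟩ := Metric.eventually_nhds_iff.1 hev
  refine ⟨r, hr, fun x hx hxr => ?_⟩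
  have h1 := hb (y := x) (by simpa using hxr)
  have h2 : N *ᵥ crd V x = 0 := by
    ext i
    obtain ⟨m, hm⟩ := hx.2 i
    have h3 := h1 i
    rw [← hm] at h3 ⊢
    have h4 : |m| < 1 := by exact_mod_cast h3
    rw [Int.abs_lt_one_iff.1 h4]
    simp
  have h3 : crd V x = 0 := by
    rw [← one_mulVec (crd V x), ← nonsing_inv_mul _ hu, ← mulVec_mulVec, h2, mulVec_zero]
  rw [← vcc_crd V hx.1, h3]
  simp [vcc]

theorem latM_continuous {Y : Type*} [TopologicalSpace Y]
    (γ : Y → Matrix (Fin (Module.finrank ℝ V)) (Fin (Module.finrank ℝ V)) ℝ) (hγ : Continuous γ)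
    (hd : ∀ y, (γ y).det ≠ 0) : Continuous (fun y => latM V (γ y)) := by
  have hu : ∀ y, IsUnit (γ y).det := fun y => isUnit_iff_ne_zero.2 (hd y)
  have hinv : Continuous (fun y => (γ y)⁻¹) := by
    have : (fun y => (γ y)⁻¹) = fun y => (γ y).det⁻¹ • (γ y).adjugate := by
      ext y : 1
      rw [inv_def, Ring.inverse_eq_inv']
    rw [this]
    exact (hγ.matrix_det.inv₀ hd).smul hγ.matrix_adjugate
  refine chab_continuous _ ?_ ?_
  · intro y x hx
    rw [mem_latM, not_and] at hx
    by_cases hxV : x ∈ V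
    · have h1 := hx hxV
      push Not at h1
      obtain ⟨i, hi⟩ := h1
      have hc : Continuous (fun q : Y × Euc n => (γ q.1 *ᵥ crd V q.2) i) :=
        (continuous_apply i).comp
          ((hγ.comp continuous_fst).matrix_mulVec ((crd_continuous V).comp continuous_snd))
      have hO := (Int.isClosedEmbedding_coe_real.isClosed_range.isOpen_compl).preimage hc
      filter_upwards [hO.mem_nhds hi] with q hq hq'
      exact hq (hq'.2 i)
    · have hO : IsOpen {q : Y × Euc n | q.2 ∉ V} :=
        (V.closed_of_finiteDimensional.isOpen_compl).preimage continuous_snd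
      filter_upwards [hO.mem_nhds hxV] with q hq hq'
      exact hq hq'.1
  · intro y x hx ε hε
    have hc : Continuous (fun y' => dist (vcc V ((γ y')⁻¹ *ᵥ (γ y *ᵥ crd V x))) x) :=
      ((vcc_continuous V).comp (hinv.matrix_mulVec continuous_const)).dist continuous_const
    have hev : ∀ᶠ y' in 𝓝 y, dist (vcc V ((γ y')⁻¹ *ᵥ (γ y *ᵥ crd V x))) x < ε := by
      apply hc.continuousAt.eventually_lt continuousAt_const
      rw [mulVec_mulVec, nonsing_inv_mul _ (hu y), one_mulVec, vcc_crd V hx.1, dist_self]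
      exact hε
    filter_upwards [hev] with y' hy'
    refine ⟨_, ?_, hy'⟩
    rw [mem_latM]
    refine ⟨vcc_mem V _, fun i => ?_⟩
    rw [crd_vcc, mulVec_mulVec, mul_nonsing_inv _ (hu y'), one_mulVec]
    exact hx.2 i

theorem latM_diagonal (ε : Fin (Module.finrank ℝ V) → ℤ) (hε : ∀ i, ε i * ε i = 1) :
    latM V (diagonal fun i => (ε i : ℝ)) = latM V 1 := by
  apply chab_ext
  intro x
  rw [mem_latM, mem_latM]
  refine and_congr_right fun _ => forall_congr' fun i => ?_
  rw [mulVec_diagonal, one_mulVec]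
  constructor
  · rintro ⟨m, hm⟩
    refine ⟨ε i * m, ?_⟩
    push_cast
    rw [hm, ← mul_assoc]
    have : (ε i : ℝ) * ε i = 1 := by exact_mod_cast hε i
    rw [this, one_mul]
  · rintro ⟨m, hm⟩
    exact ⟨ε i * m, by push_cast; rw [hm]⟩

theorem exists_latM {Γ : ChabautyPoint n} (hE : Γ ∈ Eset V) (hD : Γ ∈ Dset n) :
    ∃ N, det N ≠ 0 ∧ Γ = latM V N := by
  obtain ⟨r, hr, hr'⟩ := hD
  let L : Submodule ℤ V := AddSubgroup.toIntSubmodule (Γ.1.comap (V.subtype : V →+ Euc n))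
  have hL : ∀ x : V, x ∈ L ↔ (x : Euc n) ∈ Γ.1 := fun x => Iff.rfl
  have hdisc : DiscreteTopology L := by
    refine discreteTopology_of_isOpen_singleton_zero ?_
    rw [Metric.isOpen_singleton_iff]
    refine ⟨r, hr, fun y hy => ?_⟩
    have : ((y : V) : Euc n) = 0 := by
      apply hr' _ ((hL _).1 y.2)
      rw [dist_eq_norm, sub_zero] at hy
      exact hy
    exact Subtype.ext (Subtype.ext this)
  have hZ : IsZLattice ℝ L := by
    refine ⟨?_⟩
    rw [eq_top_iff]
    rintro x -
    have h1 := hE.2 x.2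
    have h2 : (Γ.1 : Set (Euc n)) = V.subtype '' (L : Set V) := by
      ext z
      constructor
      · intro hz
        exact ⟨⟨z, hE.1 z hz⟩, hz, rfl⟩
      · rintro ⟨w, hw, rfl⟩
        exact hw
    rw [h2, ← Submodule.map_span] at h1
    obtain ⟨w, hw, hwx⟩ := h1
    have : w = x := Subtype.ext hwx
    rwa [← this]
  have : Module.Finite ℤ L := ZLattice.module_finite ℝ L
  have : Module.Free ℤ L := ZLattice.module_free ℝ L
  let c0 := Module.finBasisOfFinrankEq ℤ L (ZLattice.rank ℝ L)
  let c := c0.ofZLatticeBasis ℝ L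
  have hspan : Submodule.span ℤ (Set.range c) = L := c0.ofZLatticeBasis_span ℝ
  let b := stdOrthonormalBasis ℝ V
  refine ⟨c.toMatrix b.toBasis, ?_, ?_⟩
  · have := c.toMatrix_mul_toMatrix_flip b.toBasis
    intro h
    have h2 := congrArg det this
    rw [det_mul, h, zero_mul, det_one] at h2
    exact zero_ne_one h2
  · apply chab_ext
    intro x
    rw [mem_latM]
    have key : ∀ hx : x ∈ V, ∀ i, (c.toMatrix b.toBasis *ᵥ crd V x) i = c.repr ⟨x, hx⟩ i := by
      intro hx i
      have h1 : (⟨x, hx⟩ : V) = ∑ k, crd V x k • b k := by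
        apply Subtype.ext
        have h2 := vcc_crd V hx
        simp only [vcc] at h2
        simp [b, h2]
      conv_rhs => rw [h1]
      simp [mulVec, dotProduct, Module.Basis.toMatrix_apply, mul_comm]
    constructor
    · intro hx
      have hxV := hE.1 x hx
      refine ⟨hxV, fun i => ?_⟩
      rw [key hxV]
      have : (⟨x, hxV⟩ : V) ∈ Submodule.span ℤ (Set.range c) := by
        rw [hspan]; exact hx
      simpa using (c.mem_span_iff_repr_mem ℤ _).1 this i
    · rintro ⟨hxV, h⟩
      have : (⟨x, hxV⟩ : V) ∈ Submodule.span ℤ (Set.range c) := by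
        rw [c.mem_span_iff_repr_mem ℤ]
        intro i
        have := h i
        rw [key hxV] at this
        simpa using this
      rw [hspan] at this
      exact this

theorem lat_joined {a b : ChabautyPoint n} (ha : a ∈ Eset V ∧ a ∈ Dset n)
    (hb : b ∈ Eset V ∧ b ∈ Dset n) : JoinedIn (Eset V ∩ Dset n) a b := by
  have key : ∀ a, (a ∈ Eset V ∧ a ∈ Dset n) → JoinedIn (Eset V ∩ Dset n) (latM V 1) a := by
    rintro a ⟨ha, ha'⟩
    obtain ⟨N, hN, rfl⟩ := exists_latM ha ha'
    obtain ⟨γ, h1, h2, h3, ε, h4, h5⟩ := matrix_path N hN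
    refine ⟨⟨⟨fun s => latM V (γ s), latM_continuous γ h1 h2⟩, ?_, ?_⟩, ?_⟩
    · change latM V (γ 0) = _
      rw [h5, latM_diagonal ε h4]
    · change latM V (γ 1) = _
      rw [h3]
    · intro t
      exact ⟨latM_mem_E (h2 t), latM_mem_D (h2 t)⟩
  exact (key a ha).symm.trans (key b hb)

end Lattices

section Local
open Topology Filter unitInterval

variable {n : ℕ}

/-- The largest linear subspace contained in a subgroup. -/
def linSub (Γ : ChabautyPoint n) : Submodule ℝ (Euc n) where
  carrier := {x | ∀ t : ℝ, t • x ∈ Γ.1}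
  zero_mem' := fun t => by rw [smul_zero]; exact Γ.1.zero_mem
  add_mem' := fun {x y} hx hy t => by rw [smul_add]; exact Γ.1.add_mem (hx t) (hy t)
  smul_mem' := fun c x hx t => by rw [smul_smul]; exact hx _

theorem mem_linSub (Γ : ChabautyPoint n) (x : Euc n) : x ∈ linSub Γ ↔ ∀ t : ℝ, t • x ∈ Γ.1 := Iff.rfl

theorem linSub_le (Γ : ChabautyPoint n) {x : Euc n} (hx : x ∈ linSub Γ) : x ∈ Γ.1 := by
  simpa using hx 1

theorem sp_sub (V : Submodule ℝ (Euc n)) (x : Euc n) :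
    V.starProjection (x - V.starProjection x) = 0 := by
  rw [map_sub, Submodule.starProjection_eq_self_iff.2 (V.starProjection_apply_mem x), sub_self]

theorem linSub_gap (Γ : ChabautyPoint n) : ∃ ρ > 0, ∀ x ∈ Γ.1,
    ‖x - (linSub Γ).starProjection x‖ < ρ → (linSub Γ).starProjection x = x := by
  by_contra! hcon
  set P := (linSub Γ).starProjection with hP
  have h1 : ∀ k : ℕ, ∃ x ∈ Γ.1, ‖x - P x‖ < 1 / ((k : ℝ) + 1) ∧ P x ≠ x :=
    fun k => hcon _ (by positivity)
  choose x hx hx1 hx2 using h1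
  let y : ℕ → Euc n := fun k => x k - P (x k)
  have hy : ∀ k, y k ∈ Γ.1 := fun k =>
    Γ.1.sub_mem (hx k) (linSub_le Γ ((linSub Γ).starProjection_apply_mem _))
  have hy0 : ∀ k, 0 < ‖y k‖ := fun k => norm_pos_iff.2 (sub_ne_zero.2 (hx2 k).symm)
  have hyP : ∀ k, P (y k) = 0 := fun k => sp_sub _ _
  have hylim : Tendsto (fun k => ‖y k‖) atTop (𝓝 0) :=
    squeeze_zero (fun _ => norm_nonneg _) (fun k => (hx1 k).le) tendsto_one_div_add_atTop_nhds_zero_nat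
  have hsph : ∀ k, ‖y k‖⁻¹ • y k ∈ Metric.sphere (0 : Euc n) 1 := by
    intro k
    rw [mem_sphere_zero_iff_norm, norm_smul, norm_inv, norm_norm, inv_mul_cancel₀ (hy0 k).ne']
  obtain ⟨w, hw, φ, hφ, hlim⟩ := (isCompact_sphere (0 : Euc n) 1).tendsto_subseq hsph
  have hwP : P w = 0 := by
    have h2 := (P.continuous.tendsto w).comp hlim
    refine tendsto_nhds_unique h2 ?_
    have : (P ∘ (fun k => ‖y k‖⁻¹ • y k) ∘ φ) = fun _ => 0 := by
      ext1 k
      simp [hyP]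
    rw [this]
    exact tendsto_const_nhds
  have hwV : w ∈ linSub Γ := by
    rw [mem_linSub]
    intro t
    have hcl := Γ.2.mem_of_tendsto (f := fun k => (⌊t / ‖y (φ k)‖⌋ : ℤ) • y (φ k)) (b := atTop)
      (x := t • w)
    refine hcl ?_ (Eventually.of_forall fun k => Γ.1.zsmul_mem (hy _) _)
    have h2 : Tendsto (fun k => t • (‖y (φ k)‖⁻¹ • y (φ k))) atTop (𝓝 (t • w)) := hlim.const_smul t
    have h3 : Tendsto (fun k => (⌊t / ‖y (φ k)‖⌋ : ℤ) • y (φ k) - t • (‖y (φ k)‖⁻¹ • y (φ k)))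
        atTop (𝓝 0) := by
      apply squeeze_zero_norm _ (hylim.comp hφ.tendsto_atTop)
      intro k
      have e : (⌊t / ‖y (φ k)‖⌋ : ℤ) • y (φ k) - t • (‖y (φ k)‖⁻¹ • y (φ k))
          = - (Int.fract (t / ‖y (φ k)‖) • y (φ k)) := by
        rw [← Int.cast_smul_eq_zsmul ℝ, Int.fract, div_eq_mul_inv]
        module
      rw [e, norm_neg, norm_smul, Real.norm_eq_abs, abs_of_nonneg (Int.fract_nonneg _)]
      have := (Int.fract_lt_one (t / ‖y (φ k)‖)).le
      have h0 := (hy0 (φ k)).le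
      simp only [Function.comp]
      nlinarith
    have h4 := h3.add h2
    simpa using h4
  have hw0 : w = 0 := by
    rw [← Submodule.starProjection_eq_self_iff.2 hwV]
    exact hwP
  rw [hw0] at hw
  simp at hw

/-- The group used to connect a subgroup to a discrete one. -/
def dPt (V : Submodule ℝ (Euc n)) (Γ A : ChabautyPoint n) : ChabautyPoint n :=
  ⟨A.1.comap (V.starProjection : Euc n →+ Euc n) ⊓
    Γ.1.comap ((ContinuousLinearMap.id ℝ (Euc n) - V.starProjection : Euc n →L[ℝ] Euc n) :
      Euc n →+ Euc n),
   (A.2.preimage V.starProjection.continuous).inter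
    (Γ.2.preimage (ContinuousLinearMap.id ℝ (Euc n) - V.starProjection : Euc n →L[ℝ] Euc n).continuous)⟩

theorem mem_dPt (V : Submodule ℝ (Euc n)) (Γ A : ChabautyPoint n) (x : Euc n) :
    x ∈ (dPt V Γ A).1 ↔ V.starProjection x ∈ A.1 ∧ x - V.starProjection x ∈ Γ.1 := Iff.rfl

theorem exists_delta (Γ : ChabautyPoint n) :
    ∃ y, ∃ δ : Path Γ y, ∀ s, s ≠ 0 → δ s ∈ Dset n := by
  obtain ⟨ρ, hρ, hgap⟩ := linSub_gap Γ
  obtain ⟨A, hAE, hAD⟩ := exists_lattice (linSub Γ)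
  set V := linSub Γ with hV
  have hsc : Continuous (fun s : I => shr V (s : ℝ) A) :=
    shr_continuous V (fun _ => A) (fun s : I => (s : ℝ)) continuous_const (by fun_prop)
      (fun _ => hAE)
  have hcont : Continuous (fun s : I => dPt V Γ (shr V (s : ℝ) A)) := by
    refine chab_continuous _ ?_ ?_
    · intro s x hx
      rw [mem_dPt, not_and_or] at hx
      rcases hx with hx | hx
      · have h1 := chab_closed hsc s _ hx
        have hc : ContinuousAt (fun q : I × Euc n => (q.1, V.starProjection q.2)) (s, x) := by
          fun_prop
        filter_upwards [hc.eventually h1] with q hq hq'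
        exact hq hq'.1
      · have hc : Continuous (fun q : I × Euc n => q.2 - V.starProjection q.2) := by fun_prop
        have hO := Γ.2.isOpen_compl.preimage hc
        filter_upwards [hO.mem_nhds hx] with q hq hq'
        exact hq hq'.2
    · intro s x hx ε hε
      obtain ⟨hx1, hx2⟩ := (mem_dPt _ _ _ _).1 hx
      have hev : ∀ᶠ q : I × Euc n in 𝓝 (s, V.starProjection x), dist q.2 (V.starProjection x) < ε := by
        have hc : Continuous (fun q : I × Euc n => dist q.2 (V.starProjection x)) := by fun_prop
        apply hc.continuousAt.eventually_lt continuousAt_const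
        simpa using hε
      filter_upwards [chab_lower' hsc s _ hx1 _ hev] with s' ⟨z, hz, hzε⟩
      have hzV := shr_sub hAE _ _ hz
      have e : V.starProjection (z + (x - V.starProjection x)) = z := by
        rw [map_add, sp_sub, add_zero, Submodule.starProjection_eq_self_iff.2 hzV]
      refine ⟨z + (x - V.starProjection x), ?_, ?_⟩
      · rw [mem_dPt, e]
        refine ⟨hz, ?_⟩
        rwa [add_sub_cancel_left]
      · change dist z (V.starProjection x) < ε at hzε
        rw [dist_eq_norm] at hzε ⊢
        convert hzε using 2
        abel
  refine ⟨_, ⟨⟨fun s : I => dPt V Γ (shr V (s : ℝ) A), hcont⟩, ?_, rfl⟩, ?_⟩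
  · apply chab_ext
    intro x
    change x ∈ (dPt V Γ (shr V ((0 : I) : ℝ) A)).1 ↔ _
    have hPx : V.starProjection x ∈ V := V.starProjection_apply_mem x
    rw [mem_dPt, Set.Icc.coe_zero, mem_shr_zero]
    constructor
    · rintro ⟨-, h⟩
      have := Γ.1.add_mem h (linSub_le Γ hPx)
      simpa using this
    · intro h
      exact ⟨hPx, Γ.1.sub_mem h (linSub_le Γ hPx)⟩
  · intro s hs
    change dPt V Γ (shr V (s : ℝ) A) ∈ Dset n
    obtain ⟨r, hr, hr'⟩ := hAD
    have hs' : (s : ℝ) ≠ 0 := fun h => hs (Subtype.ext h)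
    have hev : ∀ᶠ x in 𝓝 (0 : Euc n), ‖(s : ℝ)⁻¹ • V.starProjection x‖ < r ∧
        ‖x - V.starProjection x‖ < ρ := by
      have hc : Continuous (fun x => ‖(s : ℝ)⁻¹ • V.starProjection x‖) := by fun_prop
      have hc2 : Continuous (fun x => ‖x - V.starProjection x‖) := by fun_prop
      refine (hc.continuousAt.eventually_lt continuousAt_const ?_).and
        (hc2.continuousAt.eventually_lt continuousAt_const ?_)
      · simpa using hr
      · simpa using hρ
    obtain ⟨ε, hε, hb⟩ := Metric.eventually_nhds_iff.1 hev
    refine ⟨ε, hε, fun x hx hxε => ?_⟩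
    obtain ⟨hx1, hx2⟩ := (mem_dPt _ _ _ _).1 hx
    obtain ⟨hb1, hb2⟩ := hb (y := x) (by simpa using hxε)
    rw [mem_shr_ne V hs'] at hx1
    have h1 := hr' _ hx1 hb1
    have h2 : V.starProjection x = 0 := (smul_eq_zero.1 h1).resolve_left (inv_ne_zero hs')
    have h3 := hgap _ hx2 (by rw [sp_sub, sub_zero]; exact hb2)
    rw [sp_sub, h2, sub_zero] at h3
    exact h3.symm

end Local

section Good
open Topology Filter unitInterval

variable {n : ℕ}

/-- `F` fixes all the elements of the group in a tube. -/
def TubeFix (V : Submodule ℝ (Euc n)) (η : ℝ) (Γ : ChabautyPoint n) (F : Euc n →L[ℝ] Euc n) : Prop :=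
  ∀ z ∈ Γ.1, ‖V.starProjection z‖ < 2 * η → ‖z - V.starProjection z‖ < η → F z = z

structure Good (V : Submodule ℝ (Euc n)) (η R C : ℝ) (Γ : ChabautyPoint n)
    (F : Euc n →L[ℝ] Euc n) : Prop where
  rel : ProjRel V.starProjection F
  gap : ∀ z ∈ Γ.1, ‖z - F z‖ < R → F z = z
  bound : ‖F‖ ≤ C
  tube : TubeFix V η Γ F
  spans : V ≤ Submodule.span ℝ {x | F x ∈ Γ.1 ∧ V.starProjection x = x}
  uniq : ∀ F', ProjRel V.starProjection F' → TubeFix V η Γ F' → F' = F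

theorem abs_crd_le (V : Submodule ℝ (Euc n)) (x : Euc n) (k) : |crd V x k| ≤ ‖x‖ := by
  have h1 : |crd V x k| ≤ ‖(stdOrthonormalBasis ℝ V k : Euc n)‖ * ‖x‖ := abs_real_inner_le_norm _ _
  have h2 : ‖(stdOrthonormalBasis ℝ V k : Euc n)‖ = 1 := (stdOrthonormalBasis ℝ V).orthonormal.1 k
  rwa [h2, one_mul] at h1

theorem exists_good (V : Submodule ℝ (Euc n)) (η c R : ℝ) (hη : 0 < η) (hc : 0 < c) (hc1 : c ≤ 1 / 2)
    (hpc : (Module.finrank ℝ V : ℝ) * c ≤ 1 / 2) (hR : R = ((Module.finrank ℝ V : ℝ) + 6) * η)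
    (Γ : ChabautyPoint n)
    (hK : ∀ x ∈ Γ.1, ‖V.starProjection x‖ ≤ R → R / 2 ≤ ‖x - V.starProjection x‖ →
      ‖x - V.starProjection x‖ ≤ 3 * R → False)
    (v : Fin (Module.finrank ℝ V) → Euc n) (hv : ∀ i, v i ∈ Γ.1)
    (hv' : ∀ i, ‖v i - η • (stdOrthonormalBasis ℝ V i : Euc n)‖ < c * η) :
    ∃ F, Good V η R (4 * Module.finrank ℝ V) Γ F := by
  obtain ⟨p, hp⟩ : ∃ p : ℝ, p = Module.finrank ℝ V := ⟨_, rfl⟩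
  rw [← hp] at hpc hR ⊢
  set P := V.starProjection with hP
  set e : Fin (Module.finrank ℝ V) → Euc n := fun i => (stdOrthonormalBasis ℝ V i : Euc n) with he
  have hp0 : (0 : ℝ) ≤ p := hp ▸ Nat.cast_nonneg _
  have hPe : ∀ i, P (e i) = e i := fun i =>
    Submodule.starProjection_eq_self_iff.2 (stdOrthonormalBasis ℝ V i).2
  have hPP : ∀ x, P (P x) = P x := fun x =>
    Submodule.starProjection_eq_self_iff.2 (V.starProjection_apply_mem x)
  have hPn : ∀ x, ‖P x‖ ≤ ‖x‖ := fun x => V.norm_starProjection_apply_le x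
  have hen : ∀ i, ‖e i‖ = 1 := (stdOrthonormalBasis ℝ V).orthonormal.1
  -- the projections of the `v i`
  have hPv : ∀ i, ‖P (v i) - η • e i‖ ≤ c * η := by
    intro i
    have : P (v i) - η • e i = P (v i - η • e i) := by rw [map_sub, map_smul, hPe]
    rw [this]
    exact (hPn _).trans (hv' i).le
  have hcη : c * η ≤ η / 2 := by nlinarith
  have hvn : ∀ i, ‖v i‖ < 2 * η := by
    intro i
    have h1 : v i = (v i - η • e i) + η • e i := by abel
    have h2 : ‖η • e i‖ = η := by rw [norm_smul, hen, mul_one, Real.norm_of_nonneg hη.le]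
    have h3 := norm_add_le (v i - η • e i) (η • e i)
    rw [← h1, h2] at h3
    have := hv' i
    linarith
  have hQv : ∀ i, ‖v i - P (v i)‖ < 2 * (c * η) := by
    intro i
    have h1 : v i - P (v i) = (v i - η • e i) - (P (v i) - η • e i) := by abel
    rw [h1]
    have h2 := norm_sub_le (v i - η • e i) (P (v i) - η • e i)
    have := hv' i
    have := hPv i
    linarith
  -- sums
  have hsum : ∀ (y : Fin (Module.finrank ℝ V) → ℝ) (w : Fin (Module.finrank ℝ V) → Euc n) (a b : ℝ), (∀ i, |y i| ≤ a) → (∀ i, ‖w i‖ ≤ b) →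
      ‖∑ i, y i • w i‖ ≤ p * (a * b) := by
    intro y w a b hy hw
    refine (norm_sum_le _ _).trans ?_
    have : ∀ i ∈ Finset.univ, ‖y i • w i‖ ≤ a * b := by
      intro i _
      rw [norm_smul, Real.norm_eq_abs]
      exact mul_le_mul (hy i) (hw i) (norm_nonneg _) ((abs_nonneg _).trans (hy i))
    refine (Finset.sum_le_card_nsmul _ _ _ this).trans ?_
    simp [hp]
  have hcoef : ∀ y : Fin (Module.finrank ℝ V) → ℝ, ∀ i, |y i| ≤ 2 * ‖∑ i, y i • P (v i)‖ / η := by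
    intro y
    set T := ∑ i, y i • P (v i) with hT
    have hk : ∀ k, η * |y k| ≤ ‖T‖ + ‖y‖ * (η / 2) := by
      intro k
      have h1 : vcc V (fun i => η * y i) = ∑ i, y i • (η • e i) := by
        simp only [vcc, smul_smul, he]
        exact Finset.sum_congr rfl fun i _ => by rw [mul_comm]
      have h2 : T = vcc V (fun i => η * y i) + ∑ i, y i • (P (v i) - η • e i) := by
        rw [h1, hT, ← Finset.sum_add_distrib]
        exact Finset.sum_congr rfl fun i _ => by module
      have h3 : ‖∑ i, y i • (P (v i) - η • e i)‖ ≤ ‖y‖ * (η / 2) := by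
        refine (hsum _ _ ‖y‖ (c * η) (fun i => norm_le_pi_norm y i) hPv).trans ?_
        have : p * (‖y‖ * (c * η)) = (p * c) * (‖y‖ * η) := by ring
        rw [this]
        have : 0 ≤ ‖y‖ * η := by positivity
        nlinarith
      have h4 : crd V T k = η * y k + crd V (∑ i, y i • (P (v i) - η • e i)) k := by
        conv_lhs => rw [h2, crd_add, crd_vcc]
        rfl
      have h5 := abs_crd_le V T k
      have h6 := abs_crd_le V (∑ i, y i • (P (v i) - η • e i)) k
      have h7 : η * |y k| = |η * y k| := by rw [abs_mul, abs_of_pos hη]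
      rw [h7]
      have h8 : η * y k = crd V T k - crd V (∑ i, y i • (P (v i) - η • e i)) k := by linarith
      rw [h8]
      refine (abs_sub _ _).trans ?_
      linarith
    have hy : ‖y‖ ≤ 2 * ‖T‖ / η := by
      have h1 : ‖y‖ ≤ (‖T‖ + ‖y‖ * (η / 2)) / η := by
        rw [pi_norm_le_iff_of_nonneg (by positivity)]
        intro k
        rw [le_div_iff₀ hη, mul_comm]
        exact hk k
      rw [le_div_iff₀ hη] at h1 ⊢
      linarith
    exact fun i => (norm_le_pi_norm y i).trans hy
  -- basis
  let w : Fin (Module.finrank ℝ V) → V := fun i => ⟨P (v i), V.starProjection_apply_mem _⟩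
  have hli : LinearIndependent ℝ w := by
    rw [Fintype.linearIndependent_iff]
    intro g hg i
    have h1 : ∑ i, g i • P (v i) = 0 := by
      have := congrArg Subtype.val hg
      simpa [w] using this
    have h2 := hcoef g i
    rw [h1, norm_zero, mul_zero, zero_div] at h2
    exact abs_nonpos_iff.1 h2
  let B : Module.Basis (Fin (Module.finrank ℝ V)) ℝ V := basisOfLinearIndependentOfCardEqFinrank' w hli (by simp)
  have hB : ∀ i, B i = w i := fun i => by simp [B]
  let pr : Euc n →ₗ[ℝ] V := (P : Euc n →ₗ[ℝ] Euc n).codRestrict V fun x => V.starProjection_apply_mem x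
  have hpr : ∀ x, (pr x : Euc n) = P x := fun x => rfl
  let Y : Euc n → Fin (Module.finrank ℝ V) → ℝ := fun x i => B.repr (pr x) i
  let F : Euc n →L[ℝ] Euc n := LinearMap.toContinuousLinearMap ((B.constr ℝ v) ∘ₗ pr)
  have hF : ∀ x, F x = ∑ i, Y x i • v i := by
    intro x
    simp [F, Y, Module.Basis.constr_apply_fintype]
  have hPY : ∀ x, P x = ∑ i, Y x i • P (v i) := by
    intro x
    have h1 := congrArg Subtype.val (B.sum_repr (pr x))
    rw [hpr] at h1
    rw [← h1]
    simp [Y, hB, w]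
  have hYb : ∀ x i, |Y x i| ≤ 2 * ‖P x‖ / η := by
    intro x i
    have := hcoef (Y x) i
    rwa [← hPY] at this
  have hYP : ∀ x, Y (P x) = Y x := by
    intro x
    have : pr (P x) = pr x := Subtype.ext (hPP x)
    ext i
    simp only [Y, this]
  have hYv : ∀ i, Y (v i) = Pi.single i 1 := by
    intro i
    have : pr (v i) = B i := by rw [hB]; rfl
    ext j
    simp only [Y, this, Module.Basis.repr_self]
    rw [Finsupp.single_eq_pi_single]
  have hFv : ∀ i, F (v i) = v i := by
    intro i
    rw [hF, hYv]
    simp [Pi.single_apply]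
  have hrel : ProjRel P F := by
    refine ⟨hPP, fun x => ?_, fun x => ?_⟩
    · rw [hF, map_sum, hPY x]
      simp
    · rw [hF, hF, hYP]
  have hgap : ∀ z ∈ Γ.1, ‖z - F z‖ < R → F z = z := by
    intro z hz hzR
    by_contra hne
    have hpos : 0 < ‖z - F z‖ := norm_pos_iff.2 (sub_ne_zero.2 (Ne.symm hne))
    obtain ⟨m, hm1, hm2⟩ := exists_nat_mul_between hpos hzR
    let z' : Euc n := m • z
    have hz' : z' ∈ Γ.1 := Γ.1.nsmul_mem hz m
    let z2 : Euc n := z' - ∑ i, (round (Y z' i) : ℤ) • v i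
    have hz2 : z2 ∈ Γ.1 := Γ.1.sub_mem hz' (Γ.1.sum_mem fun i _ => Γ.1.zsmul_mem (hv i) _)
    have hFz2 : F z2 = ∑ i, (Y z' i - round (Y z' i)) • v i := by
      simp only [z2, map_sub, map_sum, map_zsmul, hFv]
      rw [hF z', ← Finset.sum_sub_distrib]
      refine Finset.sum_congr rfl fun i _ => ?_
      rw [← Int.cast_smul_eq_zsmul ℝ]
      module
    have hzF2 : z2 - F z2 = m • (z - F z) := by
      have : F z2 = F z' - ∑ i, (round (Y z' i) : ℤ) • v i := by
        simp only [z2, map_sub, map_sum, map_zsmul, hFv]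
      rw [this]
      simp only [z2, z', map_nsmul, smul_sub]
      abel
    have hn2 : ‖z2 - F z2‖ = m * ‖z - F z‖ := by
      rw [hzF2, ← Nat.cast_smul_eq_nsmul ℝ, norm_smul]; simp
    have hP2 : P z2 = ∑ i, (Y z' i - round (Y z' i)) • P (v i) := by
      rw [← hrel.pf, hFz2, map_sum]
      simp
    have hQ2 : F z2 - P z2 = ∑ i, (Y z' i - round (Y z' i)) • (v i - P (v i)) := by
      rw [hFz2, hP2, ← Finset.sum_sub_distrib]
      exact Finset.sum_congr rfl fun i _ => by module
    have hb1 : ‖P z2‖ ≤ p * (1 / 2 * (2 * η)) := by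
      rw [hP2]
      exact hsum _ _ _ _ (fun i => abs_sub_round _) (fun i => (hPn _).trans (hvn i).le)
    have hb2 : ‖F z2 - P z2‖ ≤ p * (1 / 2 * (2 * (c * η))) := by
      rw [hQ2]
      exact hsum _ _ _ _ (fun i => abs_sub_round _) (fun i => (hQv i).le)
    have hb3 : ‖F z2 - P z2‖ ≤ η / 2 := by nlinarith
    have h1 : z2 - P z2 = (z2 - F z2) + (F z2 - P z2) := by abel
    have h2 := norm_add_le (z2 - F z2) (F z2 - P z2)
    have h3 := norm_sub_le (z2 - P z2) (F z2 - P z2)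
    have h4 : z2 - P z2 - (F z2 - P z2) = z2 - F z2 := by abel
    rw [← h1] at h2
    rw [h4] at h3
    have hpη : 0 ≤ p * η := by positivity
    refine hK z2 hz2 ?_ ?_ ?_
    · rw [hR]; linarith
    · rw [hn2] at h3; linarith
    · rw [hn2] at h2; linarith
  have htube : TubeFix V η Γ F := by
    intro z hz h1 h2
    apply hgap z hz
    have hQ : F z - P z = ∑ i, Y z i • (v i - P (v i)) := by
      rw [hF, hPY z, ← Finset.sum_sub_distrib]
      exact Finset.sum_congr rfl fun i _ => by module
    have h4 : ∀ i, |Y z i| ≤ 4 := by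
      intro i
      refine (hYb z i).trans ?_
      rw [div_le_iff₀ hη]
      linarith
    have h3 : ‖F z - P z‖ ≤ p * (4 * (2 * (c * η))) := by
      rw [hQ]
      exact hsum _ _ _ _ h4 (fun i => (hQv i).le)
    have h5 : ‖F z - P z‖ ≤ 4 * η := by nlinarith
    have h6 : z - F z = (z - P z) - (F z - P z) := by abel
    rw [h6]
    have h7 := norm_sub_le (z - P z) (F z - P z)
    have hpη : 0 ≤ p * η := by positivity
    rw [hR]
    have : ‖z - P z‖ < η := h2
    linarith
  refine ⟨F, hrel, hgap, ?_, htube, ?_, ?_⟩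
  · refine F.opNorm_le_bound (by positivity) fun x => ?_
    rw [hF]
    refine (hsum _ _ (2 * ‖x‖ / η) (2 * η) (fun i => (hYb x i).trans ?_) fun i => (hvn i).le).trans ?_
    · have := hPn x
      gcongr
    · apply le_of_eq
      field_simp
      ring
  · intro x hx
    have hPx : P x = x := Submodule.starProjection_eq_self_iff.2 hx
    rw [← hPx, hPY x]
    refine Submodule.sum_mem _ fun i _ => Submodule.smul_mem _ _ (Submodule.subset_span ?_)
    refine ⟨?_, hPP _⟩
    rw [hrel.fp, hFv]
    exact hv i
  · intro F' hrel' htube'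
    have h1 : ∀ i, F' (v i) = v i := by
      intro i
      refine htube' _ (hv i) ((hPn _).trans_lt (hvn i)) ?_
      have := hQv i
      have h2 : ‖v i - V.starProjection (v i)‖ = ‖v i - P (v i)‖ := rfl
      rw [h2]
      linarith
    ext1 x
    rw [← hrel'.fp, hPY x, map_sum, hF]
    refine Finset.sum_congr rfl fun i _ => ?_
    rw [map_smul, hrel'.fp, h1]

end Good

section Final
open Topology Filter unitInterval

variable {n : ℕ}

theorem good_continuous {Y : Type*} [TopologicalSpace Y] {V : Submodule ℝ (Euc n)} {η R C : ℝ}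
    {f : Y → ChabautyPoint n} (hf : Continuous f) {F : Y → Euc n →L[ℝ] Euc n}
    (hG : ∀ y, Good V η R C (f y) (F y)) : Continuous F := by
  rw [continuous_iff_continuousAt]
  intro y0
  have : ProperSpace (Euc n →L[ℝ] Euc n) := FiniteDimensional.proper ℝ _
  refine (isCompact_closedBall (0 : Euc n →L[ℝ] Euc n) C).tendsto_nhds_of_unique_mapClusterPt
    (Eventually.of_forall fun y => by simpa using (hG y).bound) ?_
  intro G _ hcl
  have hcl' : ∀ S : Set (Euc n →L[ℝ] Euc n), IsClosed S → (∀ y, F y ∈ S) → G ∈ S := by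
    intro S hS h
    by_contra hGS
    have h1 := (mapClusterPt_iff_frequently.1 hcl) Sᶜ (hS.isOpen_compl.mem_nhds hGS)
    obtain ⟨y, hy⟩ := h1.exists
    exact hy (h y)
  refine (hG y0).uniq G ⟨(hG y0).rel.pp, fun x => ?_, fun x => ?_⟩ ?_
  · exact hcl' {G | V.starProjection (G x) = V.starProjection x}
      (isClosed_eq (by fun_prop) (by fun_prop)) (fun y => (hG y).rel.pf x)
  · exact hcl' {G | G (V.starProjection x) = G x}
      (isClosed_eq (by fun_prop) (by fun_prop)) (fun y => (hG y).rel.fp x)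
  · intro z hz h1 h2
    by_contra hne
    have hO : IsOpen {q : (Euc n →L[ℝ] Euc n) × Euc n | q.1 q.2 ≠ q.2 ∧
        ‖V.starProjection q.2‖ < 2 * η ∧ ‖q.2 - V.starProjection q.2‖ < η} := by
      refine IsOpen.inter (isOpen_ne_fun (by fun_prop) (by fun_prop)) (IsOpen.inter ?_ ?_)
      · have hc : Continuous (fun q : (Euc n →L[ℝ] Euc n) × Euc n => ‖V.starProjection q.2‖) := by
          fun_prop
        exact isOpen_lt hc continuous_const
      · have hc : Continuous (fun q : (Euc n →L[ℝ] Euc n) × Euc n =>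
          ‖q.2 - V.starProjection q.2‖) := by fun_prop
        exact isOpen_lt hc continuous_const
    have hmem := hO.mem_nhds (x := (G, z)) ⟨hne, h1, h2⟩
    rw [nhds_prod_eq, mem_prod_iff] at hmem
    obtain ⟨A, hA, B, hB, hAB⟩ := hmem
    have hfr := (mapClusterPt_iff_frequently.1 hcl) A hA
    have hev : ∀ᶠ q : Y × Euc n in 𝓝 (y0, z), q.2 ∈ B :=
      continuous_snd.continuousAt.eventually (p := fun w => w ∈ B) hB
    obtain ⟨y, hyA, w, hw, hwB⟩ := (hfr.and_eventually (chab_lower' hf y0 z hz _ hev)).exists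
    obtain ⟨k1, k2, k3⟩ := hAB (Set.mk_mem_prod hyA hwB)
    exact k1 ((hG y).tube w hw k2 k3)

theorem expG_zero_mem_E {V : Submodule ℝ (Euc n)} {η R C : ℝ} {Γ : ChabautyPoint n}
    {F : Euc n →L[ℝ] Euc n} (hG : Good V η R C Γ F) : expG V.starProjection F 0 Γ ∈ Eset V := by
  refine ⟨fun x hx => ?_, ?_⟩
  · rw [mem_expG_zero] at hx
    exact Submodule.starProjection_eq_self_iff.1 hx.2
  · have : ((expG V.starProjection F 0 Γ).1 : Set (Euc n)) =
        {x | F x ∈ Γ.1 ∧ V.starProjection x = x} := by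
      ext x
      exact mem_expG_zero _ _ _ _
    rw [this]
    exact hG.spans

theorem good_path_DH {V : Submodule ℝ (Euc n)} {η R C : ℝ} (hR : 0 < R) {a b : ChabautyPoint n}
    (p : Path a b) (ha : a ∈ Dset n) (hb : b ∈ Dset n) (hG : ∀ t, ∃ F, Good V η R C (p t) F) :
    DH (Dset n) (Path.Homotopic.Quotient.mk p) := by
  choose F hF using hG
  have hFc : Continuous F := good_continuous (f := fun t => p t) p.continuous hF
  let Φ : I × I → ChabautyPoint n := fun z =>
    expG V.starProjection (F z.2) (1 - (z.1 : ℝ)) (p z.2)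
  have hΦ : Continuous Φ := by
    refine expG_continuous (fun z : I × I => p z.2) V.starProjection (fun z => F z.2)
      (fun z => 1 - (z.1 : ℝ)) (by fun_prop) (by fun_prop) (by fun_prop)
      (fun z => (hF z.2).rel) ?_
    intro y0
    exact ⟨R, hR, Eventually.of_forall fun y => (hF y.2).gap⟩
  have hp0 : p 0 ∈ Dset n := by rw [p.source]; exact ha
  have hp1 : p 1 ∈ Dset n := by rw [p.target]; exact hb
  have hl : ∀ s, Φ (s, 0) ∈ Dset n := fun s => expG_mem_D (hF 0).rel _ hp0
  have hr : ∀ s, Φ (s, 1) ∈ Dset n := fun s => expG_mem_D (hF 1).rel _ hp1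
  let q : Path (Φ (1, 0)) (Φ (1, 1)) := ⟨⟨fun t => Φ (1, t), by fun_prop⟩, rfl, rfl⟩
  have hqE : ∀ t, q t ∈ Eset V := by
    intro t
    change expG V.starProjection (F t) (1 - ((1 : I) : ℝ)) (p t) ∈ Eset V
    rw [Set.Icc.coe_one, sub_self]
    exact expG_zero_mem_E (hF t)
  have hJ : JoinedIn (Eset V ∩ Dset n) (Φ (1, 0)) (Φ (1, 1)) :=
    lat_joined ⟨hqE 0, hl 1⟩ ⟨hqE 1, hr 1⟩
  obtain ⟨g, hg⟩ := hJ
  refine DH.square Φ hΦ p q ?_ (fun t => rfl) hl hr ?_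
  · intro t
    change p t = expG V.starProjection (F t) (1 - ((0 : I) : ℝ)) (p t)
    rw [Set.Icc.coe_zero, sub_zero, expG_one]
  · rw [Eset_paths V q g hqE (fun t => (hg t).1)]
    exact DH.of g (fun t => (hg t).2)

theorem exists_U (Γ : ChabautyPoint n) : ∃ U ∈ 𝓝 Γ, ∀ (a b : ChabautyPoint n) (p : Path a b),
    a ∈ Dset n → b ∈ Dset n → (∀ t, p t ∈ U) → DH (Dset n) (Path.Homotopic.Quotient.mk p) := by
  obtain ⟨ρ, hρ, hgap⟩ := linSub_gap Γ
  set V := linSub Γ with hV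
  obtain ⟨d, hd⟩ : ∃ d : ℝ, d = Module.finrank ℝ V := ⟨_, rfl⟩
  have hd0 : 0 ≤ d := hd ▸ Nat.cast_nonneg _
  let c : ℝ := 1 / (2 * (d + 1))
  have hc : 0 < c := by positivity
  have hc1 : c ≤ 1 / 2 := by
    simp only [c]
    rw [div_le_div_iff₀ (by positivity) (by norm_num)]
    linarith
  have hdc : d * c ≤ 1 / 2 := by
    simp only [c]
    rw [mul_one_div, div_le_div_iff₀ (by positivity) (by norm_num)]
    linarith
  let R : ℝ := ρ / 4
  have hR : 0 < R := by positivity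
  let η : ℝ := R / (d + 6)
  have hη : 0 < η := by positivity
  have hRη : R = (d + 6) * η := by simp only [η]; field_simp
  let K : Set (Euc n) := {x | ‖V.starProjection x‖ ≤ R ∧ R / 2 ≤ ‖x - V.starProjection x‖ ∧
    ‖x - V.starProjection x‖ ≤ 3 * R}
  have hK : IsCompact K := by
    refine Metric.isCompact_of_isClosed_isBounded ?_ ?_
    · have c1 : Continuous (fun x => ‖V.starProjection x‖) := by fun_prop
      have c2 : Continuous (fun x => ‖x - V.starProjection x‖) := by fun_prop
      exact (isClosed_le c1 continuous_const).inter
        ((isClosed_le continuous_const c2).inter (isClosed_le c2 continuous_const))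
    · refine isBounded_iff_forall_norm_le.2 ⟨4 * R, ?_⟩
      rintro x ⟨h1, -, h3⟩
      have h4 := norm_add_le (V.starProjection x) (x - V.starProjection x)
      rw [add_sub_cancel] at h4
      linarith
  let e : Fin (Module.finrank ℝ V) → Euc n := fun i => (stdOrthonormalBasis ℝ V i : Euc n)
  let U : Set (ChabautyPoint n) := {A | ((A.1 : Set (Euc n)) ∩ K) = ∅} ∩
    ⋂ i, {A | ((A.1 : Set (Euc n)) ∩ Metric.ball (η • e i) (c * η)).Nonempty}
  have hU : IsOpen U := by
    refine IsOpen.inter ?_ (isOpen_iInter_of_finite fun i => ?_)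
    · exact TopologicalSpace.isOpen_generateFrom_of_mem (Or.inl ⟨K, hK, rfl⟩)
    · exact TopologicalSpace.isOpen_generateFrom_of_mem (Or.inr ⟨_, Metric.isOpen_ball, rfl⟩)
  have hΓ : Γ ∈ U := by
    refine ⟨?_, ?_⟩
    · change (Γ.1 : Set (Euc n)) ∩ K = ∅
      rw [Set.eq_empty_iff_forall_notMem]
      rintro x ⟨hx, -, h2, h3⟩
      have h4 := hgap x hx (by simp only [R] at h3; linarith)
      rw [h4, sub_self, norm_zero] at h2
      linarith
    · rw [Set.mem_iInter]
      intro i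
      refine ⟨η • e i, ?_, Metric.mem_ball_self (by positivity)⟩
      exact linSub_le Γ ((linSub Γ).smul_mem η (stdOrthonormalBasis ℝ V i).2)
  refine ⟨U, hU.mem_nhds hΓ, fun a b p ha hb hp => ?_⟩
  refine good_path_DH (V := V) (η := η) (R := R) (C := 4 * Module.finrank ℝ V) hR p ha hb ?_
  intro t
  obtain ⟨h1, h2⟩ := hp t
  rw [Set.mem_iInter] at h2
  choose v hv hv' using h2
  refine exists_good V η c R hη hc hc1 (hd ▸ hdc) (hd ▸ hRη) (p t) ?_ v hv ?_
  · intro x hx k1 k2 k3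
    have h3 : ((p t).1 : Set (Euc n)) ∩ K = ∅ := h1
    have h4 : x ∈ ((p t).1 : Set (Euc n)) ∩ K := ⟨hx, k1, k2, k3⟩
    rw [h3] at h4
    exact h4
  · intro i
    have := hv' i
    rw [mem_ball_iff_norm] at this
    exact this

end Final

/-- The Chabauty space of ℝⁿ is simply connected. -/
theorem chabauty_simply_connected (n : ℕ) (hn : 1 ≤ n) :
    SimplyConnectedSpace (ChabautyPoint n) := by
  refine simply_connected_criterion (Dset n)
    (fun z => expG 0 0 (1 - (z.2 : ℝ)) z.1.1) D_contr_continuous (zeroPt n) ?_ ?_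
    exists_delta exists_U
  · intro s
    simp [expG_one]
  · intro s
    simp [D_contr_one]
end
end

section
/- The set of closed subgroups of ℝⁿ of maximal rank (those generating ℝⁿ as a vector space) is open and dense in the Chabauty space 𝒞(ℝⁿ), and is contractible. -/
noncomputable section

theorem chab_isOpen_miss {n : ℕ} {K : Set (Euc n)} (hK : IsCompact K) :
    IsOpen {Γ : ChabautyPoint n | ((Γ.1 : Set (Euc n)) ∩ K) = ∅} :=
  TopologicalSpace.isOpen_generateFrom_of_mem (Or.inl ⟨K, hK, rfl⟩)

theorem chab_isOpen_hit {n : ℕ} {U : Set (Euc n)} (hU : IsOpen U) :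
    IsOpen {Γ : ChabautyPoint n | ((Γ.1 : Set (Euc n)) ∩ U).Nonempty} :=
  TopologicalSpace.isOpen_generateFrom_of_mem (Or.inr ⟨U, hU, rfl⟩)

theorem chab_exists_basis {n : ℕ} (Γ : ChabautyPoint n)
    (h : Submodule.span ℝ (Γ.1 : Set (Euc n)) = ⊤) :
    ∃ v : Fin n → Euc n, (∀ i, v i ∈ Γ.1) ∧ LinearIndependent ℝ v := by
  obtain ⟨f, h1, h2, h3⟩ := Submodule.exists_fun_fin_finrank_span_eq ℝ (Γ.1 : Set (Euc n))
  have e : Module.finrank ℝ (Submodule.span ℝ (Γ.1 : Set (Euc n))) = n := by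
    rw [h]; simp
  refine ⟨fun i => f (Fin.cast e.symm i), fun i => h1 _, ?_⟩
  exact h3.comp _ (Fin.cast_injective _)

open Filter Topology in
theorem chab_nhds {n : ℕ} (Γ : ChabautyPoint n)
    (h : Submodule.span ℝ (Γ.1 : Set (Euc n)) = ⊤) :
    ∃ C : ℝ, 0 < C ∧ ∀ᶠ Δ in 𝓝 Γ, ∃ w : Fin n → Euc n,
      (∀ i, w i ∈ Δ.1) ∧ LinearIndependent ℝ w ∧ ∑ i, ‖w i‖ ≤ C := by
  obtain ⟨v, hv, hli⟩ := chab_exists_basis Γ h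
  have hpos : 0 ≤ ∑ i, ‖v i‖ := Finset.sum_nonneg fun i _ => norm_nonneg _
  refine ⟨∑ i, ‖v i‖ + 1, by linarith, ?_⟩
  have ho : IsOpen ({w : Fin n → Euc n | LinearIndependent ℝ w} ∩
      {w | ∑ i, ‖w i‖ < ∑ i, ‖v i‖ + 1}) :=
    isOpen_setOfPred_linearIndependent.inter (isOpen_lt (by fun_prop) (by fun_prop))
  obtain ⟨u, hu, hsub⟩ := isOpen_pi_iff'.1 ho v ⟨hli, by simp⟩
  have : ∀ᶠ Δ : ChabautyPoint n in 𝓝 Γ, ∀ i, ((Δ.1 : Set (Euc n)) ∩ u i).Nonempty := by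
    rw [eventually_all]
    exact fun i => (chab_isOpen_hit (hu i).1).mem_nhds ⟨v i, hv i, (hu i).2⟩
  filter_upwards [this] with Δ hΔ
  choose w hw using hΔ
  have := hsub (fun i _ => (hw i).2 : w ∈ Set.univ.pi u)
  exact ⟨w, fun i => (hw i).1, this.1, this.2.le⟩

theorem chab_span_of_li {n : ℕ} (Γ : AddSubgroup (Euc n)) (w : Fin n → Euc n)
    (hw : ∀ i, w i ∈ Γ) (hli : LinearIndependent ℝ w) :
    Submodule.span ℝ (Γ : Set (Euc n)) = ⊤ := by
  rw [eq_top_iff, ← hli.span_eq_top_of_card_eq_finrank' (by simp)]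
  apply Submodule.span_mono
  rintro _ ⟨i, rfl⟩
  exact hw i

theorem chab_approx {n : ℕ} (Γ : AddSubgroup (Euc n)) (w : Fin n → Euc n)
    (hw : ∀ i, w i ∈ Γ) (hli : LinearIndependent ℝ w) (y : Euc n) :
    ∃ g ∈ Γ, ‖y - g‖ ≤ ∑ i, ‖w i‖ := by
  have hs := hli.span_eq_top_of_card_eq_finrank' (by simp)
  have hy : y ∈ Submodule.span ℝ (Set.range w) := by rw [hs]; trivial
  obtain ⟨c, hc⟩ := (Submodule.mem_span_range_iff_exists_fun ℝ).1 hy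
  refine ⟨∑ i, ⌊c i⌋ • w i, Γ.sum_mem fun i _ => Γ.zsmul_mem (hw i) _, ?_⟩
  rw [← hc, ← Finset.sum_sub_distrib]
  refine (norm_sum_le _ _).trans (Finset.sum_le_sum fun i _ => ?_)
  have : c i • w i - ⌊c i⌋ • w i = Int.fract (c i) • w i := by
    rw [← Int.self_sub_floor, sub_smul, Int.cast_smul_eq_zsmul]
  rw [this, norm_smul, Real.norm_of_nonneg (Int.fract_nonneg _)]
  exact mul_le_of_le_one_left (norm_nonneg _) (Int.fract_lt_one _).le

theorem chab_open (n : ℕ) :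
    IsOpen {Γ : ChabautyPoint n | Submodule.span ℝ (Γ.1 : Set (Euc n)) = ⊤} := by
  rw [isOpen_iff_mem_nhds]
  intro Γ hΓ
  obtain ⟨C, -, hC⟩ := chab_nhds Γ hΓ
  filter_upwards [hC] with Δ ⟨w, h1, h2, _⟩
  exact chab_span_of_li _ w h1 h2

/-- Enlarge `Γ` by a sparse lattice in the directions `b i`. -/
def chabThick {n : ℕ} (Γ : ChabautyPoint n) {ι : Type} (b : ι → Euc n) (k : ℝ) :
    ChabautyPoint n :=
  ⟨Γ.1.comap ((Submodule.span ℝ (Γ.1 : Set (Euc n))).starProjection : Euc n →+ Euc n) ⊓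
    ⨅ i, (AddSubgroup.zmultiples k).comap (innerSL ℝ (b i) : Euc n →+ ℝ), by
    rw [AddSubgroup.coe_inf, AddSubgroup.coe_iInf]
    refine IsClosed.inter ?_ (isClosed_iInter fun i => ?_)
    · exact Γ.2.preimage (ContinuousLinearMap.continuous _)
    · exact (AddSubgroup.isClosed_of_discrete (H := AddSubgroup.zmultiples k)).preimage
        (innerSL ℝ (b i)).continuous⟩

theorem chab_mem_thick {n : ℕ} (Γ : ChabautyPoint n) {ι : Type} (b : ι → Euc n) (k : ℝ)
    (x : Euc n) : x ∈ (chabThick Γ b k).1 ↔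
      (Submodule.span ℝ (Γ.1 : Set (Euc n))).starProjection x ∈ Γ.1 ∧
      ∀ i, ∃ m : ℤ, m * k = inner ℝ (b i) x := by
  simp [chabThick, AddSubgroup.mem_inf, AddSubgroup.mem_iInf, AddSubgroup.mem_zmultiples_iff]

open Filter Topology in
theorem chab_dense (n : ℕ) :
    Dense {Γ : ChabautyPoint n | Submodule.span ℝ (Γ.1 : Set (Euc n)) = ⊤} := by
  intro Γ
  set V := Submodule.span ℝ (Γ.1 : Set (Euc n)) with hV
  let b := stdOrthonormalBasis ℝ Vᗮ
  let b' : Fin (Module.finrank ℝ Vᗮ) → Euc n := fun i => (b i : Euc n)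
  have hmem : ∀ x ∈ Γ.1, ∀ k, x ∈ (chabThick Γ b' k).1 := by
    intro x hx k
    rw [chab_mem_thick]
    have hxV : x ∈ V := Submodule.subset_span hx
    refine ⟨?_, fun i => ⟨0, ?_⟩⟩
    · rwa [Submodule.starProjection_eq_self_iff.2 hxV]
    · rw [Submodule.inner_left_of_mem_orthogonal hxV (b i).2]; simp
  have hspan : ∀ k : ℕ, Submodule.span ℝ ((chabThick Γ b' (k + 1)).1 : Set (Euc n)) = ⊤ := by
    intro k
    rw [eq_top_iff, ← Submodule.sup_orthogonal_of_hasOrthogonalProjection (K := V)]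
    refine sup_le (Submodule.span_mono fun x hx => hmem x hx _) ?_
    have : Vᗮ = Submodule.span ℝ (Set.range b') := by
      have h1 := congrArg (Submodule.map Vᗮ.subtype) b.toBasis.span_eq
      rw [Submodule.map_span, Submodule.map_subtype_top, ← Set.range_comp] at h1
      exact h1.symm.trans (congrArg (Submodule.span ℝ) (congrArg Set.range (by ext; simp [b'])))
    refine this.le.trans (Submodule.span_le.2 ?_)
    rintro _ ⟨i, rfl⟩
    have h2 : ((k : ℝ) + 1) • b' i ∈ (chabThick Γ b' (k + 1)).1 := by
      rw [chab_mem_thick]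
      constructor
      · have : V.starProjection (((k : ℝ) + 1) • b' i) = 0 := by
          rw [Submodule.starProjection_apply_eq_zero_iff]
          exact Vᗮ.smul_mem _ (b i).2
        rw [this]; exact Γ.1.zero_mem
      · intro j
        have := orthonormal_iff_ite.1 b.orthonormal j i
        rw [Submodule.coe_inner] at this
        refine ⟨if j = i then 1 else 0, ?_⟩
        rw [inner_smul_right, this]
        split_ifs <;> simp
    have h3 := (Submodule.span ℝ ((chabThick Γ b' (k + 1)).1 : Set (Euc n))).smul_mem
      ((k : ℝ) + 1)⁻¹ (Submodule.subset_span h2)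
    rwa [smul_smul, inv_mul_cancel₀ (by positivity), one_smul] at h3
  have hlim : Tendsto (fun k : ℕ => chabThick Γ b' (k + 1)) atTop (𝓝 Γ) := by
    rw [TopologicalSpace.tendsto_nhds_generateFrom_iff]
    rintro s (⟨K, hK, rfl⟩ | ⟨U, hU, rfl⟩) hs
    · obtain ⟨r, hr⟩ := hK.isBounded.exists_norm_le
      obtain ⟨N, hN⟩ := exists_nat_gt r
      filter_upwards [eventually_ge_atTop N] with k hk
      simp only [Set.mem_preimage, Set.mem_ofPred_eq] at hs ⊢
      rw [Set.eq_empty_iff_forall_notMem] at hs ⊢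
      rintro x ⟨hx, hxK⟩
      apply hs x
      refine ⟨?_, hxK⟩
      obtain ⟨h1, h2⟩ := (chab_mem_thick _ _ _ _).1 hx
      have hz : ∀ i, inner ℝ (b' i) x = 0 := by
        intro i
        obtain ⟨m, hm⟩ := h2 i
        have h4 : |inner ℝ (b' i) x| ≤ r := by
          refine (abs_real_inner_le_norm _ _).trans ?_
          have : ‖b' i‖ = 1 := b.orthonormal.1 i
          rw [this, one_mul]; exact hr x hxK
        have hkN : (N : ℝ) ≤ k := by exact_mod_cast hk
        rcases eq_or_ne m 0 with rfl | hm0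
        · simpa using hm.symm
        · exfalso
          have : (1 : ℝ) ≤ |(m : ℝ)| := by exact_mod_cast Int.one_le_abs hm0
          rw [← hm, abs_mul, abs_of_pos (by positivity : (0 : ℝ) < k + 1)] at h4
          nlinarith [(Nat.cast_nonneg k : (0 : ℝ) ≤ k)]
      have hxV : x ∈ V := by
        rw [← Submodule.orthogonal_orthogonal V, Submodule.mem_orthogonal]
        intro u hu
        have := b.sum_repr ⟨u, hu⟩
        have h5 := congrArg (Subtype.val) this
        simp only [Submodule.coe_sum, Submodule.coe_smul] at h5
        rw [← h5, sum_inner]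
        exact Finset.sum_eq_zero fun i _ => by rw [inner_smul_left, hz i, mul_zero]
      rwa [Submodule.starProjection_eq_self_iff.2 hxV] at h1
    · obtain ⟨x, hx, hxU⟩ := hs
      exact Eventually.of_forall fun k => ⟨x, hmem x hx _, hxU⟩
  exact mem_closure_of_tendsto hlim (Eventually.of_forall hspan)

/-- The contraction `t ↦ t Γ`, with value `ℝⁿ` at `t = 0`. -/
def chabScale {n : ℕ} (t : ℝ) (Γ : ChabautyPoint n) : ChabautyPoint n :=
  ⟨{ carrier := {x | t = 0 ∨ t⁻¹ • x ∈ Γ.1}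
     zero_mem' := Or.inr (by simp)
     add_mem' := by
      rintro x y (h | h) (h' | h')
      · exact Or.inl h
      · exact Or.inl h
      · exact Or.inl h'
      · exact Or.inr (by rw [smul_add]; exact Γ.1.add_mem h h')
     neg_mem' := by
      rintro x (h | h)
      · exact Or.inl h
      · exact Or.inr (by rw [smul_neg]; exact Γ.1.neg_mem h) }, by
    change IsClosed ({_x : Euc n | t = 0} ∪ {x : Euc n | t⁻¹ • x ∈ Γ.1})
    exact isClosed_const.union (Γ.2.preimage (continuous_const_smul _))⟩

theorem chab_mem_scale {n : ℕ} (t : ℝ) (Γ : ChabautyPoint n) (x : Euc n) :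
    x ∈ (chabScale t Γ).1 ↔ t = 0 ∨ t⁻¹ • x ∈ Γ.1 := Iff.rfl

theorem chab_span_scale {n : ℕ} (t : ℝ) (Γ : ChabautyPoint n)
    (h : Submodule.span ℝ (Γ.1 : Set (Euc n)) = ⊤) :
    Submodule.span ℝ ((chabScale t Γ).1 : Set (Euc n)) = ⊤ := by
  rcases eq_or_ne t 0 with rfl | ht
  · rw [eq_top_iff]
    exact fun x _ => Submodule.subset_span (Or.inl rfl)
  · rw [eq_top_iff, ← h, Submodule.span_le]
    intro x hx
    have h1 : t • x ∈ (chabScale t Γ).1 := Or.inr (by rwa [inv_smul_smul₀ ht])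
    have h3 := (Submodule.span ℝ ((chabScale t Γ).1 : Set (Euc n))).smul_mem
      t⁻¹ (Submodule.subset_span h1)
    rwa [inv_smul_smul₀ ht] at h3

open Filter Topology in
theorem chab_scale_tendsto {n : ℕ} (t : ℝ) (Γ : ChabautyPoint n)
    (h : Submodule.span ℝ (Γ.1 : Set (Euc n)) = ⊤) :
    Tendsto (fun p : ℝ × ChabautyPoint n => chabScale p.1 p.2)
      (𝓝 t ×ˢ 𝓝 Γ) (𝓝 (chabScale t Γ)) := by
  rw [TopologicalSpace.tendsto_nhds_generateFrom_iff]
  rintro s (⟨K, hK, rfl⟩ | ⟨U, hU, rfl⟩) hs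
  · rcases eq_or_ne t 0 with rfl | ht
    · have : K = ∅ := by
        rw [Set.eq_empty_iff_forall_notMem]
        intro x hx
        have : x ∈ ((chabScale 0 Γ).1 : Set (Euc n)) ∩ K := ⟨Or.inl rfl, hx⟩
        rw [hs] at this
        exact this
      subst this
      exact Eventually.of_forall fun p => by simp
    · have hs' : ∀ x ∈ K, t⁻¹ • x ∉ Γ.1 := by
        intro x hx hxt
        have : x ∈ ((chabScale t Γ).1 : Set (Euc n)) ∩ K := ⟨Or.inr hxt, hx⟩
        rw [hs] at this
        exact this
      have h1 : ∀ᶠ r in 𝓝 t, ∀ x ∈ K, r⁻¹ • x ∉ Γ.1 := by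
        apply hK.eventually_forall_of_forall_eventually
        intro x hx
        have hc : ContinuousAt (fun z : ℝ × Euc n => z.1⁻¹ • z.2) (t, x) :=
          (continuousAt_fst.inv₀ ht).smul continuousAt_snd
        exact hc.eventually_mem (Γ.2.isOpen_compl.mem_nhds (hs' x hx))
      obtain ⟨δ, hδ, hball⟩ := Metric.nhds_basis_closedBall.eventually_iff.1
        (h1.and (eventually_ne_nhds ht))
      have hc : IsCompact ((fun z : ℝ × Euc n => z.1⁻¹ • z.2) '' (Metric.closedBall t δ ×ˢ K)) := by
        apply ((isCompact_closedBall t δ).prod hK).image_of_continuousOn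
        exact (continuousOn_fst.inv₀ fun z hz => (hball hz.1).2).smul continuousOn_snd
      have h2 : ∀ᶠ Δ in 𝓝 Γ, ((Δ.1 : Set (Euc n)) ∩
          ((fun z : ℝ × Euc n => z.1⁻¹ • z.2) '' (Metric.closedBall t δ ×ˢ K))) = ∅ := by
        apply (chab_isOpen_miss hc).mem_nhds
        change _ = _
        rw [Set.eq_empty_iff_forall_notMem]
        rintro _ ⟨hx, ⟨r, x⟩, ⟨hr, hxK⟩, rfl⟩
        exact (hball hr).1 x hxK hx
      have h3 : ∀ᶠ r in 𝓝 t, r ∈ Metric.closedBall t δ := Metric.closedBall_mem_nhds t hδ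
      filter_upwards [h3.prod_mk h2]
      rintro ⟨r, Δ⟩ ⟨hr, hΔ⟩
      change _ = _
      rw [Set.eq_empty_iff_forall_notMem] at hΔ ⊢
      rintro x ⟨hx | hx, hxK⟩
      · exact (hball hr).2 hx
      · exact hΔ _ ⟨hx, ⟨r, x⟩, ⟨hr, hxK⟩, rfl⟩
  · obtain ⟨x, hx, hxU⟩ := hs
    rcases eq_or_ne t 0 with rfl | ht
    · obtain ⟨C, hC, hev⟩ := chab_nhds Γ h
      obtain ⟨ε, hε, hball⟩ := Metric.isOpen_iff.1 hU x hxU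
      have h1 : ∀ᶠ r : ℝ in 𝓝 0, |r| * C < ε := by
        have hc : ContinuousAt (fun r : ℝ => |r| * C) 0 := by fun_prop
        exact hc.eventually_lt continuousAt_const (by simpa using hε)
      filter_upwards [h1.prod_mk hev]
      rintro ⟨r, Δ⟩ ⟨hr, w, hw, hli, hsum⟩
      rcases eq_or_ne r 0 with rfl | hr0
      · exact ⟨x, Or.inl rfl, hxU⟩
      · obtain ⟨g, hg, hgn⟩ := chab_approx Δ.1 w hw hli (r⁻¹ • x)
        refine ⟨r • g, Or.inr (by simpa [inv_smul_smul₀ hr0] using hg), hball ?_⟩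
        rw [Metric.mem_ball, dist_comm, dist_eq_norm]
        have : x - r • g = r • (r⁻¹ • x - g) := by rw [smul_sub, smul_inv_smul₀ hr0]
        rw [this, norm_smul, Real.norm_eq_abs]
        exact (mul_le_mul_of_nonneg_left (hgn.trans hsum) (abs_nonneg r)).trans_lt hr
    · have hx' : t⁻¹ • x ∈ Γ.1 := hx.resolve_left ht
      have hc : Tendsto (fun z : ℝ × Euc n => z.1 • z.2) (𝓝 t ×ˢ 𝓝 (t⁻¹ • x)) (𝓝 x) := by
        have : Tendsto (fun z : ℝ × Euc n => z.1 • z.2) (𝓝 (t, t⁻¹ • x))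
            (𝓝 (t • t⁻¹ • x)) := (continuous_fst.smul continuous_snd).tendsto _
        rwa [smul_inv_smul₀ ht, nhds_prod_eq] at this
      obtain ⟨A, hA, B, hB, hAB⟩ := mem_prod_iff.1 (hc (hU.mem_nhds hxU))
      obtain ⟨B', hB', hBo, hxB⟩ := mem_nhds_iff.1 hB
      have h2 : ∀ᶠ Δ in 𝓝 Γ, ((Δ.1 : Set (Euc n)) ∩ B').Nonempty :=
        (chab_isOpen_hit hBo).mem_nhds ⟨_, hx', hxB⟩
      have h3 : ∀ᶠ r in 𝓝 t, r ∈ A := hA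
      filter_upwards [(h3.and (eventually_ne_nhds ht)).prod_mk h2]
      rintro ⟨r, Δ⟩ ⟨⟨hr, hr0⟩, y, hy, hyB⟩
      exact ⟨r • y, Or.inr (by simpa [inv_smul_smul₀ hr0] using hy),
        hAB (Set.mk_mem_prod hr (hB' hyB))⟩

theorem chab_contractible (n : ℕ) : ContractibleSpace
    {Γ : ChabautyPoint n | Submodule.span ℝ (Γ.1 : Set (Euc n)) = ⊤} := by
  rw [contractible_iff_id_nullhomotopic]
  have htop : Submodule.span ℝ ((⊤ : AddSubgroup (Euc n)) : Set (Euc n)) = ⊤ := by simp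
  refine ⟨⟨⟨⊤, isClosed_univ⟩, htop⟩, ContinuousMap.Homotopic.symm ⟨?_⟩⟩
  refine
    { toFun := fun p => ⟨chabScale (p.1 : ℝ) p.2.1, chab_span_scale _ _ p.2.2⟩
      continuous_toFun := ?_
      map_zero_left := ?_
      map_one_left := ?_ }
  · refine Continuous.subtype_mk (continuous_iff_continuousAt.2 ?_) _
    rintro ⟨t, Γ, hΓ⟩
    refine (chab_scale_tendsto (t : ℝ) Γ hΓ).comp (Filter.Tendsto.prodMk ?_ ?_)
    · exact (continuous_subtype_val.comp continuous_fst).tendsto _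
    · exact (continuous_subtype_val.comp continuous_snd).tendsto
        ((t, ⟨Γ, hΓ⟩) : unitInterval × {Γ : ChabautyPoint n |
          Submodule.span ℝ (Γ.1 : Set (Euc n)) = ⊤})
  · rintro ⟨Γ, hΓ⟩
    apply Subtype.ext
    apply Subtype.ext
    ext x
    exact iff_of_true (Or.inl rfl) trivial
  · rintro ⟨Γ, hΓ⟩
    apply Subtype.ext
    apply Subtype.ext
    ext x
    refine (chab_mem_scale _ _ _).trans ?_
    simp

/-- The set of closed subgroups of ℝⁿ of maximal rank (spanning ℝⁿ) is open, dense and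
contractible in the Chabauty space. -/
theorem maximal_rank_open_dense_contractible (n : ℕ) :
    let R : Set (ChabautyPoint n) :=
      {Γ : ChabautyPoint n | Submodule.span ℝ (Γ.1 : Set (Euc n)) = ⊤}
    IsOpen R ∧ Dense R ∧ ContractibleSpace R := by
  exact ⟨chab_open n, chab_dense n, chab_contractible n⟩
end
end
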